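/- arXiv:1811.08405 — 3 statements merged into one kernel-verified Lean document; each statement's English description precedes it below -/
import Mathlib

section
/- The fused transfer matrix T₂ has 2N central zeroes: for every b ∈ {1, …, N} and every u ∈ ℂ with u⁶ = q² ξ_b² (i.e. with spectral parameter λ = u³ equal to q ξ_b or −q ξ_b), one has T₂(u) = 0 in End(H). -/
open Matrix Kronecker BigOperators

/-- Elementary 3×3 matrices `E i j`. -/
noncomputable def Eb (i j : Fin 3) : Matrix (Fin 3) (Fin 3) ℂ :=
  Matrix.single i j 1

/-- Principal gradation trigonometric R-matrix of `U_q(gl₃^)`, with spectral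
parameter `λ = u³` parametrized by the cube root `u`. -/
noncomputable def RpM (q u : ℂ) : Matrix (Fin 3 × Fin 3) (Fin 3 × Fin 3) ℂ :=
  (∑ k : Fin 3, ∑ p : Fin 3,
    if k = p then (u ^ 3 * q - (u ^ 3 * q)⁻¹) • (Eb k k ⊗ₖ Eb k k)
    else (u ^ 3 - (u ^ 3)⁻¹) • (Eb k k ⊗ₖ Eb p p))
  + (q - q⁻¹) • ∑ k : Fin 3, ∑ p : Fin 3,
      (if k < p then
        u ^ ((3 : ℤ) - 2 * (((p : ℕ) : ℤ) - ((k : ℕ) : ℤ))) • (Eb k p ⊗ₖ Eb p k)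
        + u ^ (2 * (((p : ℕ) : ℤ) - ((k : ℕ) : ℤ)) - (3 : ℤ)) • (Eb p k ⊗ₖ Eb k p)
      else 0)

/-- Index type of the quantum space `H = (ℂ³)^{⊗N}`. -/
abbrev HIdx (N : ℕ) := Fin N → Fin 3

/-- `R_{a,b}(u)`: the R-matrix acting on the auxiliary space and the `b`-th
factor of the quantum space, identity elsewhere. -/
noncomputable def Raux (N : ℕ) (q u : ℂ) (b : Fin N) :
    Matrix (Fin 3 × HIdx N) (Fin 3 × HIdx N) ℂ :=
  Matrix.of fun x y =>
    RpM q u (x.1, x.2 b) (y.1, y.2 b) * (if ∀ c, c ≠ b → x.2 c = y.2 c then 1 else 0)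

/-- The twist matrix acting on the auxiliary space, identity on `H`. -/
noncomputable def Kaux (N : ℕ) (K : Matrix (Fin 3) (Fin 3) ℂ) :
    Matrix (Fin 3 × HIdx N) (Fin 3 × HIdx N) ℂ :=
  Matrix.of fun x y => K x.1 y.1 * (if x.2 = y.2 then 1 else 0)

/-- Monodromy matrix `M(u) = K_a R_{a,N}(u/ζ_N) ⋯ R_{a,1}(u/ζ_1)`. -/
noncomputable def Mon (N : ℕ) (q : ℂ) (ζ : Fin N → ℂ) (K : Matrix (Fin 3) (Fin 3) ℂ)
    (u : ℂ) : Matrix (Fin 3 × HIdx N) (Fin 3 × HIdx N) ℂ :=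
  Kaux N K * (((List.finRange N).reverse.map fun b => Raux N q (u / ζ b) b).prod)

/-- Transfer matrix `T₁(u) = tr_a M(u)`. -/
noncomputable def T1 (N : ℕ) (q : ℂ) (ζ : Fin N → ℂ) (K : Matrix (Fin 3) (Fin 3) ℂ)
    (u : ℂ) : Matrix (HIdx N) (HIdx N) ℂ :=
  Matrix.of fun f g => ∑ i : Fin 3, Mon N q ζ K u (i, f) (i, g)

/-- The q-antisymmetric projector `P⁻ = R_q(p⁻¹)/(2(q⁻¹ − q))`. -/
noncomputable def Pm (q p : ℂ) : Matrix (Fin 3 × Fin 3) (Fin 3 × Fin 3) ℂ :=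
  (2 * (q⁻¹ - q))⁻¹ • RpM q p⁻¹

/-- Embedding of an operator on (auxiliary space a) ⊗ H into
(aux a) ⊗ (aux b) ⊗ H, identity on aux b. -/
noncomputable def embA (N : ℕ) (M : Matrix (Fin 3 × HIdx N) (Fin 3 × HIdx N) ℂ) :
    Matrix (Fin 3 × Fin 3 × HIdx N) (Fin 3 × Fin 3 × HIdx N) ℂ :=
  Matrix.of fun x y => M (x.1, x.2.2) (y.1, y.2.2) * (if x.2.1 = y.2.1 then 1 else 0)

/-- Embedding of an operator on (auxiliary space b) ⊗ H into
(aux a) ⊗ (aux b) ⊗ H, identity on aux a. -/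
noncomputable def embB (N : ℕ) (M : Matrix (Fin 3 × HIdx N) (Fin 3 × HIdx N) ℂ) :
    Matrix (Fin 3 × Fin 3 × HIdx N) (Fin 3 × Fin 3 × HIdx N) ℂ :=
  Matrix.of fun x y => M (x.2.1, x.2.2) (y.2.1, y.2.2) * (if x.1 = y.1 then 1 else 0)

/-- Embedding of an operator on (aux a) ⊗ (aux b) into (aux a) ⊗ (aux b) ⊗ H. -/
noncomputable def embP (N : ℕ) (P : Matrix (Fin 3 × Fin 3) (Fin 3 × Fin 3) ℂ) :
    Matrix (Fin 3 × Fin 3 × HIdx N) (Fin 3 × Fin 3 × HIdx N) ℂ :=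
  Matrix.of fun x y => P (x.1, x.2.1) (y.1, y.2.1) * (if x.2.2 = y.2.2 then 1 else 0)

/-- Fused transfer matrix `T₂(u) = tr_{ab}(P⁻_{ab} M_b(u) M_a(u/p))`. -/
noncomputable def T2 (N : ℕ) (q p : ℂ) (ζ : Fin N → ℂ) (K : Matrix (Fin 3) (Fin 3) ℂ)
    (u : ℂ) : Matrix (HIdx N) (HIdx N) ℂ :=
  Matrix.of fun f g => ∑ ia : Fin 3, ∑ ib : Fin 3,
    (embP N (Pm q p) * embB N (Mon N q ζ K u) * embA N (Mon N q ζ K (u / p)))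
      (ia, ib, f) (ia, ib, g)

/-!
Cyclicity of the partial trace moves `P⁻ ∝ R_{ab}(p⁻¹)` to the right of `M_b(u) M_a(u/p)`, and it
already annihilates that product. After the twists are commuted to the left, the Yang-Baxter
equation carries `R_{ab}(p⁻¹)` through the pairs `R_{bs}(v p) R_{as}(v)` up to the site `s` with
`w ^ 6 = 1` for `w = u/(p ζ_s)`. If `w = 1`, then `R_{as}(w)` is a multiple of the permutation of
`a` and `s`, so `R_{bs}(p) R_{as}(1) R_{ab}(p⁻¹)` is proportional to a permutation times
`R_{ba}(p) R_{ab}(p⁻¹)`, which vanishes by unitarity at `p ^ 3 = q`. The other sixth roots of unity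
reduce to `w = 1`, since `v ↦ w v` changes `R` only by a scalar and a diagonal conjugation.
-/

open Function (update update_apply update_comm)

/-- The coefficient of `E_{ii} ⊗ E_{jj}` in `R_q(u)`. -/
noncomputable def diagWeight (q u : ℂ) (i j : Fin 3) : ℂ :=
  if i = j then u ^ 3 * q - (u ^ 3 * q)⁻¹ else u ^ 3 - (u ^ 3)⁻¹

/-- The coefficient of `E_{ij} ⊗ E_{ji}` in `R_q(u)`. The principal gradation makes it depend only
on `j - i` modulo `3`, hence the cyclic successor `i + 1` in `Fin 3`. -/
noncomputable def swapWeight (q u : ℂ) (i j : Fin 3) : ℂ :=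
  if i = j then 0 else if j = i + 1 then (q - q⁻¹) * u else (q - q⁻¹) * u⁻¹

theorem RpM_eq_sum (q u : ℂ) :
    RpM q u = ∑ i, ∑ j, (diagWeight q u i j • (Eb i i ⊗ₖ Eb j j) +
      swapWeight q u i j • (Eb i j ⊗ₖ Eb j i)) := by
  simp only [RpM, diagWeight, swapWeight, Fin.sum_univ_three, Fin.isValue, Fin.reduceEq,
    Fin.reduceLT, Fin.reduceAdd, Fin.lt_one_iff, Fin.coe_ofNat_eq_mod, not_lt_zero,
    lt_self_iff_false, zero_ne_one, one_ne_zero, ↓reduceIte, Nat.reduceAdd, Nat.zero_mod,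
    Nat.one_mod, Nat.mod_succ, Nat.cast_one, Nat.cast_ofNat, CharP.cast_eq_zero, Int.reduceSub,
    Int.reduceMul, sub_zero, zero_add, add_zero, mul_one, zpow_ofNat, pow_one, _root_.zpow_neg,
    smul_add, zero_smul]
  module

theorem RpM_apply (q u : ℂ) (i j k l : Fin 3) :
    RpM q u (i, j) (k, l) =
      (if (k, l) = (i, j) then diagWeight q u i j else 0) +
        (if (k, l) = (j, i) then swapWeight q u i j else 0) := by
  simp only [RpM_eq_sum, Eb, Matrix.sum_apply, Matrix.add_apply, Matrix.smul_apply,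
    kroneckerMap_apply, single_apply, ite_and, Finset.sum_add_distrib, smul_eq_mul, mul_ite,
    mul_one, mul_zero, Finset.sum_ite_irrel, Finset.sum_const_zero, Finset.sum_ite_eq',
    Finset.mem_univ, if_true]
  grind

section Swap

variable {ι α : Type*} {x y z : ι}

theorem eq_iff_of_agree_off_pair {σ τ ρ : ι → α} (h : ∀ z, z ≠ x → z ≠ y → ρ z = σ z) :
    τ = ρ ↔ (τ x, τ y) = (ρ x, ρ y) ∧ ∀ z, z ≠ x → z ≠ y → σ z = τ z := by
  constructor
  · rintro rfl
    exact ⟨rfl, fun z hx hy => (h z hx hy).symm⟩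
  · rintro ⟨hxy, hz⟩
    rw [Prod.mk.injEq] at hxy
    funext z
    by_cases hx : z = x
    · exact hx ▸ hxy.1
    by_cases hy : z = y
    · exact hy ▸ hxy.2
    rw [h z hx hy, hz z hx hy]

variable [DecidableEq ι]

theorem comp_swap_comp_swap (hxz : x ≠ z) (hyz : y ≠ z) (σ : ι → α) :
    (σ ∘ Equiv.swap x y) ∘ Equiv.swap y z = (σ ∘ Equiv.swap x z) ∘ Equiv.swap x y := by
  have h := Equiv.mul_swap_eq_swap_mul (Equiv.swap x y) y z
  rw [Equiv.swap_apply_right, Equiv.swap_apply_of_ne_of_ne hxz.symm hyz.symm] at h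
  exact congrArg (fun π : Equiv.Perm ι => σ ∘ π) h

theorem comp_swap_comp_swap_comm {t : ι} (hxz : x ≠ z) (hxt : x ≠ t) (hyz : y ≠ z) (hyt : y ≠ t)
    (σ : ι → α) :
    (σ ∘ Equiv.swap x y) ∘ Equiv.swap z t = (σ ∘ Equiv.swap z t) ∘ Equiv.swap x y := by
  have h := Equiv.mul_swap_eq_swap_mul (Equiv.swap x y) z t
  rw [Equiv.swap_apply_of_ne_of_ne hxz.symm hyz.symm,
    Equiv.swap_apply_of_ne_of_ne hxt.symm hyt.symm] at h
  exact congrArg (fun π : Equiv.Perm ι => σ ∘ π) h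

theorem comp_swap_comp_swap_self (x y : ι) (σ : ι → α) :
    (σ ∘ Equiv.swap x y) ∘ Equiv.swap x y = σ := by
  funext z
  simp

theorem update_update_comp_swap (hxy : x ≠ y) (σ : ι → α) (a b : α) :
    update (update σ x a) y b ∘ Equiv.swap x y = update (update σ x b) y a := by
  funext z
  simp only [Function.comp_apply, update_apply, Equiv.swap_apply_def]
  grind

end Swap

section Sites

variable {ι : Type*} [Fintype ι] [DecidableEq ι] {x y z : ι}

/-- `R_{x,y}(u)`: the R-matrix acting on the sites `x` and `y`, in this order, of a family of copies
of `ℂ³` labelled by `ι`, and as the identity on the other sites. -/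
noncomputable def siteR (q u : ℂ) (x y : ι) : Matrix (ι → Fin 3) (ι → Fin 3) ℂ :=
  of fun σ τ => RpM q u (σ x, σ y) (τ x, τ y) *
    if ∀ z, z ≠ x → z ≠ y → σ z = τ z then 1 else 0

theorem siteR_apply (q u : ℂ) (x y : ι) (σ τ : ι → Fin 3) :
    siteR q u x y σ τ =
      (if τ = σ then diagWeight q u (σ x) (σ y) else 0) +
        (if τ = σ ∘ Equiv.swap x y then swapWeight q u (σ x) (σ y) else 0) := by
  have hswap z (hx : z ≠ x) (hy : z ≠ y) : (σ ∘ Equiv.swap x y) z = σ z := by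
    simp [Equiv.swap_apply_of_ne_of_ne hx hy]
  rw [siteR, of_apply, RpM_apply,
    if_congr (eq_iff_of_agree_off_pair (x := x) (y := y) fun _ _ _ => rfl) rfl rfl,
    if_congr (eq_iff_of_agree_off_pair hswap) rfl rfl]
  by_cases h : ∀ z, z ≠ x → z ≠ y → σ z = τ z
  · rw [if_pos h]
    simp [and_iff_left h]
  · rw [if_neg h]
    simp [h]

theorem siteR_mulVec_apply (q u : ℂ) (x y : ι) (ψ : (ι → Fin 3) → ℂ) (σ : ι → Fin 3) :
    (siteR q u x y *ᵥ ψ) σ =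
      diagWeight q u (σ x) (σ y) * ψ σ +
        swapWeight q u (σ x) (σ y) * ψ (σ ∘ Equiv.swap x y) := by
  simp [mulVec, dotProduct, siteR_apply, add_mul, Finset.sum_add_distrib]

theorem commute_siteR_siteR {t : ι} (q u v : ℂ) (hxz : x ≠ z) (hxt : x ≠ t) (hyz : y ≠ z)
    (hyt : y ≠ t) : Commute (siteR q u x y) (siteR q v z t) := by
  refine ext_of_mulVec_single fun τ => funext fun σ => ?_
  simp only [← mulVec_mulVec, siteR_mulVec_apply, Function.comp_apply,
    Equiv.swap_apply_of_ne_of_ne hxz hxt, Equiv.swap_apply_of_ne_of_ne hyz hyt,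
    Equiv.swap_apply_of_ne_of_ne hxz.symm hyz.symm, Equiv.swap_apply_of_ne_of_ne hxt.symm hyt.symm,
    comp_swap_comp_swap_comm hxz hxt hyz hyt]
  ring

theorem siteR_yang_baxter {q v w : ℂ} (hq : q ≠ 0) (hv : v ≠ 0) (hw : w ≠ 0)
    (hxy : x ≠ y) (hxz : x ≠ z) (hyz : y ≠ z) :
    siteR q v y z * siteR q (v * w) x z * siteR q w x y =
      siteR q w x y * siteR q (v * w) x z * siteR q v y z := by
  refine ext_of_mulVec_single fun τ => funext fun σ => ?_
  let e (a b c : Fin 3) : ι → Fin 3 := update (update (update σ z c) x a) y b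
  have ex a b c : e a b c x = a := by simp [e, hxy]
  have ey a b c : e a b c y = b := by simp [e]
  have ez a b c : e a b c z = c := by simp [e, hxz.symm, hyz.symm]
  have exy a b c : e a b c ∘ Equiv.swap x y = e b a c := update_update_comp_swap hxy _ a b
  have exz a b c : e a b c ∘ Equiv.swap x z = e c b a := by
    simp only [e, update_comm hxy, update_comm hyz.symm]
    rw [Equiv.swap_comm, update_update_comp_swap hxz.symm]
  have eyz a b c : e a b c ∘ Equiv.swap y z = e a c b := by
    simp only [e, update_comm hxz.symm]
    rw [Equiv.swap_comm, update_update_comp_swap hyz.symm]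
  have hσ : σ = e (σ x) (σ y) (σ z) := by simp [e]
  rw [hσ]
  clear_value e
  generalize σ x = i, σ y = j, σ z = k
  simp only [← mulVec_mulVec, siteR_mulVec_apply, ex, ey, ez, exy, exz, eyz]
  fin_cases i <;> fin_cases j <;> fin_cases k <;>
    simp [diagWeight, swapWeight] <;> field_simp <;> ring

theorem siteR_mul_siteR_inv {q u : ℂ} (hq : q ≠ 0) (hu : u ≠ 0) (x y : ι) :
    siteR q u y x * siteR q u⁻¹ x y =
      ((q - q⁻¹) ^ 2 - (u ^ 3 - (u ^ 3)⁻¹) ^ 2) • (1 : Matrix (ι → Fin 3) (ι → Fin 3) ℂ) := by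
  refine ext_of_mulVec_single fun τ => funext fun σ => ?_
  generalize (Pi.single τ 1 : (ι → Fin 3) → ℂ) = ψ
  simp only [← mulVec_mulVec, siteR_mulVec_apply, smul_mulVec, one_mulVec, Pi.smul_apply,
    smul_eq_mul, Function.comp_apply, Equiv.swap_apply_left, Equiv.swap_apply_right,
    Equiv.swap_comm y x, comp_swap_comp_swap_self]
  generalize σ x = i, σ y = j, ψ σ = a, ψ (σ ∘ _) = b
  fin_cases i <;> fin_cases j <;> simp [diagWeight, swapWeight] <;> field_simp <;> ring

theorem siteR_one_mulVec_apply (q : ℂ) (x y : ι) (ψ : (ι → Fin 3) → ℂ) (σ : ι → Fin 3) :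
    (siteR q 1 x y *ᵥ ψ) σ = (q - q⁻¹) * ψ (σ ∘ Equiv.swap x y) := by
  rw [siteR_mulVec_apply]
  by_cases h : σ x = σ y
  · have hσ : σ ∘ Equiv.swap x y = σ := by
      funext z
      simp only [Function.comp_apply, Equiv.swap_apply_def]
      grind
    simp [diagWeight, swapWeight, h, hσ]
  · simp [diagWeight, swapWeight, h]

theorem siteR_mul_siteR_one (q u : ℂ) (hxy : x ≠ y) (hyz : y ≠ z) :
    siteR q u y z * siteR q 1 x z = siteR q 1 x z * siteR q u y x := by
  refine ext_of_mulVec_single fun τ => funext fun σ => ?_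
  simp only [← mulVec_mulVec, siteR_mulVec_apply q u, siteR_one_mulVec_apply, Function.comp_apply,
    Equiv.swap_apply_left, Equiv.swap_apply_of_ne_of_ne hxy.symm hyz]
  have h := comp_swap_comp_swap hyz.symm hxy σ
  simp only [Equiv.swap_comm z, Equiv.swap_comm x y] at h
  rw [h]
  ring

/-- The diagonal operator on the site `z` implementing the symmetry `u ↦ w u`, `w ^ 6 = 1`, of the
R-matrix; its eigenvalues are powers of the cube root of unity `w ^ 4`. -/
noncomputable def phase (w : ℂ) (z : ι) : Matrix (ι → Fin 3) (ι → Fin 3) ℂ :=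
  diagonal fun σ => (w ^ 4) ^ (σ z : ℕ)

theorem isUnit_phase {w : ℂ} (hw : w ≠ 0) (z : ι) : IsUnit (phase w z) := by
  rw [phase, isUnit_diagonal, Pi.isUnit_iff]
  exact fun σ => (pow_ne_zero _ (pow_ne_zero _ hw)).isUnit

theorem commute_siteR_phase (q u w : ℂ) (hxz : x ≠ z) (hyz : y ≠ z) :
    Commute (siteR q u x y) (phase w z) := by
  refine ext_of_mulVec_single fun τ => funext fun σ => ?_
  simp only [phase, ← mulVec_mulVec, siteR_mulVec_apply, mulVec_diagonal, Function.comp_apply,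
    Equiv.swap_apply_of_ne_of_ne hxz.symm hyz.symm]
  ring

theorem siteR_mul_phase {w : ℂ} (hw : w ^ 6 = 1) (q u : ℂ) (x z : ι) :
    siteR q (w * u) x z * phase w z = w ^ 3 • (phase w z * siteR q u x z) := by
  have hw_inv : w⁻¹ = w ^ 5 := inv_eq_of_mul_eq_one_right (by rw [← hw]; ring)
  refine ext_of_mulVec_single fun τ => funext fun σ => ?_
  simp only [phase, smul_mulVec, Pi.smul_apply, smul_eq_mul, ← mulVec_mulVec, siteR_mulVec_apply,
    mulVec_diagonal, Function.comp_apply, Equiv.swap_apply_right]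
  generalize Pi.single (M := fun _ => ℂ) τ 1 σ = a, Pi.single (M := fun _ => ℂ) τ 1 (σ ∘ _) = b
  generalize σ x = i, σ z = k
  fin_cases i <;> fin_cases k <;>
    simp [diagWeight, swapWeight, mul_pow, hw_inv, -mul_eq_zero] <;> grind

theorem siteR_fusion_eq_zero {p q w : ℂ} (hq : q ≠ 0) (hp : p ^ 3 = q) (hw : w ^ 6 = 1)
    (hxy : x ≠ y) (hxz : x ≠ z) (hyz : y ≠ z) :
    siteR q (w * p) y z * siteR q w x z * siteR q p⁻¹ x y = 0 := by
  have hp0 : p ≠ 0 := ne_zero_pow three_ne_zero (hp ▸ hq)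
  have hw0 : w ≠ 0 := ne_zero_pow (by norm_num) (hw ▸ one_ne_zero)
  have unitarity : siteR q p y x * siteR q p⁻¹ x y = 0 := by
    rw [siteR_mul_siteR_inv hq hp0, hp, sub_self, zero_smul]
  refine (isUnit_phase hw0 z).mul_left_eq_zero.mp ?_
  calc siteR q (w * p) y z * siteR q w x z * siteR q p⁻¹ x y * phase w z
      = siteR q (w * p) y z * (siteR q (w * 1) x z * phase w z) * siteR q p⁻¹ x y := by
        rw [mul_assoc _ (siteR q p⁻¹ x y), (commute_siteR_phase q p⁻¹ w hxz hyz).eq, mul_one]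
        simp only [mul_assoc]
    _ = w ^ 3 • (siteR q (w * p) y z * phase w z * siteR q 1 x z * siteR q p⁻¹ x y) := by
        rw [siteR_mul_phase hw, Matrix.mul_smul, Matrix.smul_mul]
        simp only [mul_assoc]
    _ = w ^ 3 • w ^ 3 • (phase w z * (siteR q p y z * siteR q 1 x z) * siteR q p⁻¹ x y) := by
        rw [siteR_mul_phase hw]
        simp only [Matrix.smul_mul, mul_assoc]
    _ = w ^ 3 • w ^ 3 •
          (phase w z * siteR q 1 x z * (siteR q p y x * siteR q p⁻¹ x y)) := by
        rw [siteR_mul_siteR_one q p hxy hyz]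
        simp only [mul_assoc]
    _ = 0 := by rw [unitarity, mul_zero, smul_zero, smul_zero]

end Sites

section OrderedProducts

variable {ι M : Type*}

theorem prod_map_mul_prod_map_of_nodup [Monoid M] {A B : ι → M} {l : List ι} (hl : l.Nodup)
    (hAB : ∀ i j, i ≠ j → Commute (B i) (A j)) :
    (l.map B).prod * (l.map A).prod = (l.map fun i => B i * A i).prod := by
  induction l with
  | nil => simp
  | cons s l ih =>
    obtain ⟨hs, hl⟩ := List.nodup_cons.mp hl
    have hc : Commute (l.map B).prod (A s) := Commute.list_prod_left _ _ <| by
      simpa using fun t ht => hAB t s fun h => hs (h ▸ ht)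
    simp only [List.map_cons, List.prod_cons, ← ih hl, mul_assoc]
    rw [← mul_assoc _ (A s), hc.eq, mul_assoc]

theorem semiconjBy_list_prod_map [Monoid M] {a : M} {B C : ι → M}
    (h : ∀ i, SemiconjBy a (B i) (C i)) (l : List ι) :
    SemiconjBy a (l.map B).prod (l.map C).prod := by
  induction l with
  | nil => simp
  | cons s l ih => simpa using (h s).mul_right ih

theorem list_prod_map_mul_eq_zero [MonoidWithZero M] {a : M} {B C : ι → M}
    (h : ∀ i, SemiconjBy a (B i) (C i)) {l : List ι} {s : ι} (hs : s ∈ l) (hsa : C s * a = 0) :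
    (l.map C).prod * a = 0 := by
  obtain ⟨l₁, l₂, rfl⟩ := List.append_of_mem hs
  calc ((l₁ ++ s :: l₂).map C).prod * a
      = (l₁.map C).prod * (C s * ((l₂.map C).prod * a)) := by simp [mul_assoc]
    _ = (l₁.map C).prod * (C s * a * (l₂.map B).prod) := by
        rw [← (semiconjBy_list_prod_map h l₂).eq, mul_assoc]
    _ = 0 := by rw [hsa, zero_mul, mul_zero]

end OrderedProducts

section Embeddings

variable (N : ℕ)

/-- Basis states of (aux a) ⊗ (aux b) ⊗ H as configurations of spins on `N + 2` sites: the site `a`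
is `none`, the site `b` is `some none`, and the quantum site `s` is `some (some s)`. -/
def configEquiv : Fin 3 × Fin 3 × HIdx N ≃ (Option (Option (Fin N)) → Fin 3) :=
  ((Equiv.refl (Fin 3)).prodCongr (Equiv.piOptionEquivProd (β := fun _ => Fin 3)).symm).trans
    (Equiv.piOptionEquivProd (β := fun _ => Fin 3)).symm

/-- Exchange of the two auxiliary spaces. -/
def auxSwap : Fin 3 × Fin 3 × HIdx N ≃ Fin 3 × Fin 3 × HIdx N :=
  (Equiv.prodAssoc _ _ _).symm.trans <|
    ((Equiv.prodComm _ _).prodCongr (Equiv.refl _)).trans (Equiv.prodAssoc _ _ _)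

theorem embA_Raux (q u : ℂ) (s : Fin N) :
    embA N (Raux N q u s) =
      (siteR q u none (some (some s))).submatrix (configEquiv N) (configEquiv N) := by
  ext ⟨i, j, f⟩ ⟨k, l, g⟩
  simp [embA, Raux, siteR, configEquiv, Option.forall, ite_and]

theorem embB_Raux (q u : ℂ) (s : Fin N) :
    embB N (Raux N q u s) =
      (siteR q u (some none) (some (some s))).submatrix (configEquiv N) (configEquiv N) := by
  ext ⟨i, j, f⟩ ⟨k, l, g⟩
  simp [embB, Raux, siteR, configEquiv, Option.forall, ite_and]

theorem embP_RpM (q u : ℂ) :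
    embP N (RpM q u) = (siteR q u none (some none)).submatrix (configEquiv N) (configEquiv N) := by
  ext ⟨i, j, f⟩ ⟨k, l, g⟩
  simp [embP, siteR, configEquiv, Option.forall, funext_iff]

theorem embP_smul (c : ℂ) (P : Matrix (Fin 3 × Fin 3) (Fin 3 × Fin 3) ℂ) :
    embP N (c • P) = c • embP N P := by
  ext x y
  simp [embP]

theorem embB_eq_kronecker (M : Matrix (Fin 3 × HIdx N) (Fin 3 × HIdx N) ℂ) :
    embB N M = 1 ⊗ₖ M := by
  ext ⟨i, j, f⟩ ⟨k, l, g⟩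
  simp [embB, one_apply]

theorem embA_eq_submatrix_embB (M : Matrix (Fin 3 × HIdx N) (Fin 3 × HIdx N) ℂ) :
    embA N M = (embB N M).submatrix (auxSwap N) (auxSwap N) := rfl

theorem embA_Kaux (K : Matrix (Fin 3) (Fin 3) ℂ) : embA N (Kaux N K) = K ⊗ₖ 1 := by
  ext ⟨i, j, f⟩ ⟨k, l, g⟩
  simp only [embA, Kaux, of_apply, kroneckerMap_apply, one_apply, Prod.mk.injEq]
  grind

theorem commute_embB_embA_Kaux (M : Matrix (Fin 3 × HIdx N) (Fin 3 × HIdx N) ℂ)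
    (K : Matrix (Fin 3) (Fin 3) ℂ) : Commute (embB N M) (embA N (Kaux N K)) := by
  rw [embB_eq_kronecker, embA_Kaux, Commute, SemiconjBy, ← mul_kronecker_mul, ← mul_kronecker_mul]
  simp only [one_mul, mul_one]

/-- `embB` as a homomorphism of monoids. -/
noncomputable def embBHom :
    Matrix (Fin 3 × HIdx N) (Fin 3 × HIdx N) ℂ →*
      Matrix (Fin 3 × Fin 3 × HIdx N) (Fin 3 × Fin 3 × HIdx N) ℂ where
  toFun := embB N
  map_one' := by rw [embB_eq_kronecker, one_kronecker_one]
  map_mul' M M' := by simp only [embB_eq_kronecker, ← mul_kronecker_mul, one_mul]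

/-- `embA` as a homomorphism of monoids. -/
noncomputable def embAHom :
    Matrix (Fin 3 × HIdx N) (Fin 3 × HIdx N) ℂ →*
      Matrix (Fin 3 × Fin 3 × HIdx N) (Fin 3 × Fin 3 × HIdx N) ℂ where
  toFun := embA N
  map_one' := by
    rw [embA_eq_submatrix_embB, embB_eq_kronecker, one_kronecker_one, submatrix_one_equiv]
  map_mul' M M' := by
    simp only [embA_eq_submatrix_embB, submatrix_mul_equiv, embB_eq_kronecker,
      ← mul_kronecker_mul, one_mul]

end Embeddings

section Monodromy

variable {N : ℕ} {q : ℂ} {ζ : Fin N → ℂ}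

theorem commute_embB_Raux_embA_Raux {s t : Fin N} (hst : s ≠ t) (u v : ℂ) :
    Commute (embB N (Raux N q u s)) (embA N (Raux N q v t)) := by
  have h : Commute (siteR q u (some none) (some (some s))) (siteR q v none (some (some t))) :=
    commute_siteR_siteR q u v (by simp) (by simp) (by simp) (by simpa using hst)
  rw [embB_Raux, embA_Raux, Commute, SemiconjBy, submatrix_mul_equiv, h.eq, submatrix_mul_equiv]

theorem semiconjBy_embP_RpM (hq : q ≠ 0) {v w : ℂ} (hv : v ≠ 0) (hw : w ≠ 0) (s : Fin N) :
    SemiconjBy (embP N (RpM q w))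
      (embA N (Raux N q (v * w) s) * embB N (Raux N q v s))
      (embB N (Raux N q v s) * embA N (Raux N q (v * w) s)) := by
  rw [SemiconjBy, embP_RpM, embA_Raux, embB_Raux]
  simp only [submatrix_mul_equiv, ← mul_assoc]
  rw [siteR_yang_baxter hq hv hw (by simp) (by simp) (by simp)]

theorem embB_Raux_mul_embA_Raux_mul_embP_eq_zero (hq : q ≠ 0) {p w : ℂ} (hp : p ^ 3 = q)
    (hw : w ^ 6 = 1) (s : Fin N) :
    embB N (Raux N q (w * p) s) * embA N (Raux N q w s) * embP N (RpM q p⁻¹) = 0 := by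
  rw [embP_RpM, embA_Raux, embB_Raux, submatrix_mul_equiv, submatrix_mul_equiv,
    siteR_fusion_eq_zero hq hp hw (by simp) (by simp) (by simp), submatrix_zero]
  rfl

theorem embB_Mon (K : Matrix (Fin 3) (Fin 3) ℂ) (u : ℂ) :
    embB N (Mon N q ζ K u) = embB N (Kaux N K) *
      ((List.finRange N).reverse.map fun s => embB N (Raux N q (u / ζ s) s)).prod := by
  change embBHom N (_ * _) = _
  rw [map_mul, map_list_prod, List.map_map]
  rfl

theorem embA_Mon (K : Matrix (Fin 3) (Fin 3) ℂ) (u : ℂ) :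
    embA N (Mon N q ζ K u) = embA N (Kaux N K) *
      ((List.finRange N).reverse.map fun s => embA N (Raux N q (u / ζ s) s)).prod := by
  change embAHom N (_ * _) = _
  rw [map_mul, map_list_prod, List.map_map]
  rfl

theorem embB_Mon_mul_embA_Mon (K : Matrix (Fin 3) (Fin 3) ℂ) (u v : ℂ) :
    embB N (Mon N q ζ K u) * embA N (Mon N q ζ K v) =
      embB N (Kaux N K) * embA N (Kaux N K) *
        ((List.finRange N).reverse.map fun s =>
          embB N (Raux N q (u / ζ s) s) * embA N (Raux N q (v / ζ s) s)).prod := by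
  have hnodup : (List.finRange N).reverse.Nodup := List.nodup_reverse.mpr (List.nodup_finRange N)
  rw [← prod_map_mul_prod_map_of_nodup hnodup fun s t hst => commute_embB_Raux_embA_Raux hst _ _]
  have hc := commute_embB_embA_Kaux N (Mon N q ζ K u) K
  rw [embA_Mon, ← mul_assoc, hc.eq, embB_Mon, (commute_embB_embA_Kaux N (Kaux N K) K).eq]
  simp only [mul_assoc]

theorem embB_Mon_mul_embA_Mon_mul_embP_eq_zero (hq : q ≠ 0) {p : ℂ} (hp : p ^ 3 = q)
    (hζ : ∀ s, ζ s ≠ 0) (K : Matrix (Fin 3) (Fin 3) ℂ) {b : Fin N} {u : ℂ}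
    (hu : u ^ 6 = q ^ 2 * (ζ b ^ 3) ^ 2) :
    embB N (Mon N q ζ K u) * embA N (Mon N q ζ K (u / p)) * embP N (RpM q p⁻¹) = 0 := by
  have hp0 : p ≠ 0 := ne_zero_pow three_ne_zero (hp ▸ hq)
  have hζb : ζ b ≠ 0 := hζ b
  have hu0 : u ≠ 0 := by
    rintro rfl
    simp [hq, hζb] at hu
  have hyb (s : Fin N) := semiconjBy_embP_RpM hq (div_ne_zero hu0 (hζ s)) (inv_ne_zero hp0) s
  have hw : (u / ζ b * p⁻¹) ^ 6 = 1 := by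
    field_simp
    rw [hu, ← hp]
    ring
  have hb := embB_Raux_mul_embA_Raux_mul_embP_eq_zero hq hp hw b
  rw [inv_mul_cancel_right₀ hp0] at hb
  have hshift (s : Fin N) : u / p / ζ s = u / ζ s * p⁻¹ := by ring
  rw [embB_Mon_mul_embA_Mon, mul_assoc]
  simp only [hshift]
  rw [list_prod_map_mul_eq_zero hyb (by simp) hb, mul_zero]

end Monodromy

section Trace

variable {N : ℕ}

/-- The block of an operator on (aux a) ⊗ (aux b) ⊗ H between the states `f` and `g` of `H`. -/
def auxBlock (X : Matrix (Fin 3 × Fin 3 × HIdx N) (Fin 3 × Fin 3 × HIdx N) ℂ) (f g : HIdx N) :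
    Matrix (Fin 3 × Fin 3) (Fin 3 × Fin 3) ℂ :=
  X.submatrix (fun i => (i.1, i.2, f)) (fun i => (i.1, i.2, g))

theorem auxBlock_embP_mul (P : Matrix (Fin 3 × Fin 3) (Fin 3 × Fin 3) ℂ)
    (X : Matrix (Fin 3 × Fin 3 × HIdx N) (Fin 3 × Fin 3 × HIdx N) ℂ) (f g : HIdx N) :
    auxBlock (embP N P * X) f g = P * auxBlock X f g := by
  ext i j
  simp [auxBlock, embP, mul_apply, Fintype.sum_prod_type]

theorem auxBlock_mul_embP (P : Matrix (Fin 3 × Fin 3) (Fin 3 × Fin 3) ℂ)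
    (X : Matrix (Fin 3 × Fin 3 × HIdx N) (Fin 3 × Fin 3 × HIdx N) ℂ) (f g : HIdx N) :
    auxBlock (X * embP N P) f g = auxBlock X f g * P := by
  ext i j
  simp [auxBlock, embP, mul_apply, Fintype.sum_prod_type]

theorem trace_auxBlock_embP_mul_comm (P : Matrix (Fin 3 × Fin 3) (Fin 3 × Fin 3) ℂ)
    (X : Matrix (Fin 3 × Fin 3 × HIdx N) (Fin 3 × Fin 3 × HIdx N) ℂ) (f g : HIdx N) :
    (auxBlock (embP N P * X) f g).trace = (auxBlock (X * embP N P) f g).trace := by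
  rw [auxBlock_embP_mul, auxBlock_mul_embP, trace_mul_comm]

theorem T2_apply (q p : ℂ) (ζ : Fin N → ℂ) (K : Matrix (Fin 3) (Fin 3) ℂ) (u : ℂ) (f g : HIdx N) :
    T2 N q p ζ K u f g =
      (auxBlock (embP N (Pm q p) * (embB N (Mon N q ζ K u) * embA N (Mon N q ζ K (u / p))))
        f g).trace := by
  simp only [trace, Fintype.sum_prod_type, ← mul_assoc]
  rfl

end Trace

theorem T2_central_zeroes_general (N : ℕ) (q p : ℂ)
    (hq : q ≠ 0) (_hq2 : q ^ 2 ≠ 1) (hp : p ^ 3 = q)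
    (ζ : Fin N → ℂ) (hζ : ∀ b, ζ b ≠ 0) (K : Matrix (Fin 3) (Fin 3) ℂ)
    (b : Fin N) (u : ℂ) (hu : u ^ 6 = q ^ 2 * (ζ b ^ 3) ^ 2) :
    T2 N q p ζ K u = 0 := by
  ext f g
  rw [T2_apply, trace_auxBlock_embP_mul_comm, Pm, embP_smul, Matrix.mul_smul,
    embB_Mon_mul_embA_Mon_mul_embP_eq_zero hq hp hζ K hu, smul_zero]
  simp [auxBlock]

/-- the fused transfer matrix `T₂` has the `2N` central zeroes
`λ = ±q ξ_b`. -/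
theorem T2_central_zeroes (N : ℕ) (hN : 1 ≤ N) (q p : ℂ)
    (hq : q ≠ 0) (hq2 : q ^ 2 ≠ 1) (hp : p ^ 3 = q)
    (ζ : Fin N → ℂ) (hζ : ∀ b, ζ b ≠ 0) (K : Matrix (Fin 3) (Fin 3) ℂ)
    (hK : ∀ w : ℂ, w ≠ 0 → RpM q w * (K ⊗ₖ K) = (K ⊗ₖ K) * RpM q w)
    (b : Fin N) (u : ℂ) (hu : u ^ 6 = q ^ 2 * (ζ b ^ 3) ^ 2) :
    T2 N q p ζ K u = 0 :=
  T2_central_zeroes_general N q p hq hq2 hp ζ hζ K b u hu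
end

section
/- For the diagonal twist K = diag(α, β, γ), the transfer matrix T₁ has the following Laurent polynomial structure and asymptotics: there exist operators c₀, c₁, …, c_N ∈ End(H) such that for all u ≠ 0, T₁(u) = u^{−3N} Σ_{m=0}^{N} c_m u^{6m} (equivalently, λ^N T₁ is a polynomial of degree N in λ² = u⁶), with leading coefficient c_N = (α D₁ + β D₂ + γ D₃) / ∏_{n=1}^{N} ξ_n and lowest coefficient c₀ = (−1)^N (∏_{n=1}^{N} ξ_n) (α D₁⁻¹ + β D₂⁻¹ + γ D₃⁻¹). -/
open Matrix Kronecker BigOperators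

/-- Diagonal twist matrix `K⁽¹⁾ = diag(α, β, γ)`. -/
noncomputable def Ktw1 (α β γ : ℂ) : Matrix (Fin 3) (Fin 3) ℂ :=
  Matrix.diagonal ![α, β, γ]

/-- Cyclic twist matrix `K⁽²⁾ = αE₁₃ + βE₂₁ + γE₃₂`. -/
noncomputable def Ktw2 (α β γ : ℂ) : Matrix (Fin 3) (Fin 3) ℂ :=
  α • Eb 0 2 + β • Eb 1 0 + γ • Eb 2 1

/-- Cyclic twist matrix `K⁽³⁾ = βE₁₂ + γE₂₃ + αE₃₁`. -/
noncomputable def Ktw3 (α β γ : ℂ) : Matrix (Fin 3) (Fin 3) ℂ :=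
  β • Eb 0 1 + γ • Eb 1 2 + α • Eb 2 0

/-- Number of tensor factors of the basis vector indexed by `f` in state `i`. -/
noncomputable def cnt (N : ℕ) (f : HIdx N) (i : Fin 3) : ℕ :=
  (Finset.univ.filter fun m => f m = i).card

/-- The diagonal operator `D_i = q^{N_i}` on `H`. -/
noncomputable def Dop (N : ℕ) (q : ℂ) (i : Fin 3) : Matrix (HIdx N) (HIdx N) ℂ :=
  Matrix.diagonal fun f => q ^ cnt N f i

/-- The inverse diagonal operator `D_i⁻¹ = q^{−N_i}` on `H`. -/
noncomputable def DopInv (N : ℕ) (q : ℂ) (i : Fin 3) : Matrix (HIdx N) (HIdx N) ℂ :=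
  Matrix.diagonal fun f => (q ^ cnt N f i)⁻¹

/-!
The gauge transformation `diag(1, u², u⁴)` on the auxiliary space turns the R-matrix into
`u³ R(q) - u⁻³ R(q⁻¹)ᵀ`, where `R(q)` is the constant upper triangular R-matrix. The trace against
a diagonal twist does not see this gauge, so the gauged monodromy matrix may be used instead; it is
`u^{-3N}` times a product of `N` linear pencils in `u⁶`. The two extreme coefficients are products
of operators that are all upper (resp. all lower) triangular in the auxiliary space, so their
diagonal blocks multiply, and these blocks are diagonal operators on `H`.
-/

section Pencil

open Polynomial

variable {ι R : Type*} [Semiring R]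

/-- The product over `L` of the linear pencils `A b * X + B b`, with noncommuting coefficients. -/
noncomputable def pencilProd (A B : ι → R) (L : List ι) : R[X] :=
  (L.map fun b => C (A b) * X + C (B b)).prod

theorem natDegree_pencilProd_le (A B : ι → R) (L : List ι) :
    (pencilProd A B L).natDegree ≤ L.length := by
  refine (natDegree_list_prod_le _).trans ?_
  refine (List.sum_le_card_nsmul _ 1 fun d hd => ?_).trans_eq (by simp)
  simp only [List.map_map, List.mem_map, Function.comp_apply] at hd
  obtain ⟨b, -, rfl⟩ := hd
  exact natDegree_linear_le

theorem pencilProd_coeff_length (A B : ι → R) (L : List ι) :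
    (pencilProd A B L).coeff L.length = (L.map A).prod := by
  have h := coeff_list_prod_of_natDegree_le (L.map fun b => C (A b) * X + C (B b)) 1
    (by simpa only [List.forall_mem_map] using fun b _ => natDegree_linear_le)
  simpa [pencilProd, Function.comp_def] using h

theorem pencilProd_coeff_zero (A B : ι → R) (L : List ι) :
    (pencilProd A B L).coeff 0 = (L.map B).prod := by
  rw [pencilProd, ← constantCoeff_apply, map_list_prod, List.map_map]
  congr 2
  funext b
  simp

theorem list_prod_add_smul_eq_sum {k : Type*} [CommSemiring k] [Algebra k R] (A B : ι → R)
    (L : List ι) (t : k) :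
    (L.map fun b => B b + t • A b).prod
      = ∑ m ∈ Finset.range (L.length + 1), t ^ m • (pencilProd A B L).coeff m := by
  let evalAt : R[X] →+* R := eval₂RingHom' (RingHom.id R) (algebraMap k R t) fun a =>
    (Algebra.commutes t a).symm
  have heval (P : R[X]) : evalAt P = P.eval (algebraMap k R t) := rfl
  calc (L.map fun b => B b + t • A b).prod = evalAt (pencilProd A B L) := by
        rw [pencilProd, map_list_prod, List.map_map]
        congr 2
        funext b
        simp [heval, Algebra.smul_def, Algebra.commutes, add_comm]
    _ = _ := by
        rw [heval, eval_eq_sum_range' (Nat.lt_succ_of_le (natDegree_pencilProd_le A B L))]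
        simp only [← map_pow, ← Algebra.commutes, ← Algebra.smul_def, Nat.succ_eq_add_one]

end Pencil

section AuxiliarySpace

variable {ι n R : Type*} [CommSemiring R]

/-- The diagonal block `(e_i^* ⊗ 1) A (e_i ⊗ 1)` of an operator with auxiliary index type `ι`. -/
def diagBlock (i : ι) : Matrix (ι × n) (ι × n) R →ₗ[R] Matrix n n R where
  toFun A := A.submatrix (Prod.mk i) (Prod.mk i)
  map_add' _ _ := rfl
  map_smul' _ _ := rfl

@[simp]
theorem diagBlock_apply (i : ι) (A : Matrix (ι × n) (ι × n) R) (f g : n) :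
    diagBlock i A f g = A (i, f) (i, g) :=
  rfl

@[simp]
theorem diagBlock_diagonal [DecidableEq ι] [DecidableEq n] (i : ι) (d : ι × n → R) :
    diagBlock i (diagonal d) = diagonal fun f => d (i, f) := by
  ext f g
  simp [diagonal_apply]

theorem diagBlock_transpose (i : ι) (A : Matrix (ι × n) (ι × n) R) :
    diagBlock i Aᵀ = (diagBlock i A)ᵀ :=
  rfl

/-- The partial trace over the auxiliary space against the twist `diag(d)`. -/
def twistedAuxTrace [Fintype ι] (d : ι → R) : Matrix (ι × n) (ι × n) R →ₗ[R] Matrix n n R :=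
  ∑ i, d i • diagBlock i

theorem twistedAuxTrace_apply [Fintype ι] (d : ι → R) (A : Matrix (ι × n) (ι × n) R) :
    twistedAuxTrace d A = ∑ i, d i • diagBlock i A := by
  simp [twistedAuxTrace]

/-- Conjugation by the invertible matrix `diag(g)` on the auxiliary space. -/
def auxConj [Fintype ι] [Fintype n] [DecidableEq ι] [DecidableEq n] (g : ι → Rˣ) :
    Matrix (ι × n) (ι × n) R →ₐ[R] Matrix (ι × n) (ι × n) R :=
  AlgHom.ofLinearMap
    { toFun := fun A => of fun x y => g x.1 * A x y * ↑(g y.1)⁻¹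
      map_add' := fun A B => by ext; simp [mul_add, add_mul]
      map_smul' := fun c A => by ext; simp [mul_assoc, mul_left_comm] }
    (by ext x y; obtain rfl | h := eq_or_ne x y <;> simp [*])
    (fun A B => by
      ext x y
      simp only [LinearMap.coe_mk, AddHom.coe_mk, of_apply, mul_apply, Finset.mul_sum,
        Finset.sum_mul]
      refine Finset.sum_congr rfl fun z _ => ?_
      simp only [mul_assoc, Units.inv_mul_cancel_left])

section AuxConj

variable [Fintype ι] [Fintype n] [DecidableEq ι] [DecidableEq n]

@[simp]
theorem auxConj_apply (g : ι → Rˣ) (A : Matrix (ι × n) (ι × n) R) (x y : ι × n) :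
    auxConj g A x y = g x.1 * A x y * ↑(g y.1)⁻¹ :=
  rfl

theorem auxConj_mul (g h : ι → Rˣ) (A : Matrix (ι × n) (ι × n) R) :
    auxConj (g * h) A = auxConj g (auxConj h A) := by
  ext x y
  simp only [auxConj_apply, Pi.mul_apply, mul_inv, Units.val_mul]
  ring

@[simp]
theorem auxConj_diagonal (g : ι → Rˣ) (d : ι × n → R) :
    auxConj g (diagonal d) = diagonal d := by
  ext x y
  obtain rfl | hxy := eq_or_ne x y
  · simp [mul_right_comm _ (d x)]
  · simp [hxy]

@[simp]
theorem auxConj_single (g : ι → Rˣ) (x y : ι × n) (c : R) :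
    auxConj g (single x y c) = single x y (g x.1 * c * ↑(g y.1)⁻¹) := by
  ext x' y'
  by_cases h : x = x' ∧ y = y'
  · obtain ⟨rfl, rfl⟩ := h
    simp
  · simp [single_apply_of_ne, h]

@[simp]
theorem diagBlock_auxConj (g : ι → Rˣ) (A : Matrix (ι × n) (ι × n) R) (i : ι) :
    diagBlock i (auxConj g A) = diagBlock i A := by
  ext f h
  simp [mul_right_comm]

@[simp]
theorem twistedAuxTrace_auxConj (d : ι → R) (g : ι → Rˣ) (A : Matrix (ι × n) (ι × n) R) :
    twistedAuxTrace d (auxConj g A) = twistedAuxTrace d A := by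
  simp only [twistedAuxTrace_apply, diagBlock_auxConj]

theorem blockTriangular_auxConj {α : Type*} [LT α] {b : ι × n → α} (g : ι → Rˣ)
    {A : Matrix (ι × n) (ι × n) R} (hA : A.BlockTriangular b) :
    (auxConj g A).BlockTriangular b := fun x y hxy => by
  simp [hA hxy]

end AuxConj

variable {α : Type*} [LinearOrder α] {φ : ι → α} [Fintype ι] [Fintype n]

theorem diagBlock_mul (hφ : Function.Injective φ) {A B : Matrix (ι × n) (ι × n) R}
    (hA : A.BlockTriangular (φ ∘ Prod.fst)) (hB : B.BlockTriangular (φ ∘ Prod.fst)) (i : ι) :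
    diagBlock i (A * B) = diagBlock i A * diagBlock i B := by
  ext f g
  simp only [diagBlock_apply, mul_apply, Fintype.sum_prod_type]
  refine Fintype.sum_eq_single i fun j hj => Finset.sum_eq_zero fun h _ => ?_
  obtain hji | hij := (hφ.ne hj).lt_or_gt
  · rw [hA (i := (i, f)) (j := (j, h)) hji, zero_mul]
  · rw [hB (i := (j, h)) (j := (i, g)) hij, mul_zero]

theorem diagBlock_list_prod [DecidableEq ι] [DecidableEq n] (hφ : Function.Injective φ) (i : ι)
    {L : List (Matrix (ι × n) (ι × n) R)}
    (hL : ∀ A ∈ L, A.BlockTriangular (φ ∘ Prod.fst)) :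
    diagBlock i L.prod = (L.map (diagBlock i)).prod := by
  induction L with
  | nil =>
    ext f g
    simp [one_apply]
  | cons A L ih =>
    rw [List.forall_mem_cons] at hL
    have hprod : L.prod.BlockTriangular (φ ∘ Prod.fst) :=
      list_prod_mem (S := blockTriangularSubalgebra R R (φ ∘ Prod.fst)) hL.2
    rw [List.prod_cons, diagBlock_mul hφ hL.1 hprod, ih hL.2, List.map_cons, List.prod_cons]

end AuxiliarySpace

section SiteOperator

variable {ι κ σ R : Type*} [CommSemiring R] [Fintype σ] [DecidableEq σ] [DecidableEq κ]

/-- The operator on `ι ⊗ κ^{⊗σ}` that acts by a given operator of `ι ⊗ κ` on the auxiliary space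
and the tensor factor `b`, and by the identity on the other factors. -/
def siteOp (b : σ) : Matrix (ι × κ) (ι × κ) R →ₗ[R] Matrix (ι × (σ → κ)) (ι × (σ → κ)) R where
  toFun F := of fun x y =>
    F (x.1, x.2 b) (y.1, y.2 b) * if ∀ c, c ≠ b → x.2 c = y.2 c then 1 else 0
  map_add' F G := by ext; simp only [of_apply, Matrix.add_apply, add_mul]
  map_smul' c F := by ext; simp only [of_apply, Matrix.smul_apply, smul_mul_assoc, RingHom.id_apply]

theorem siteOp_apply (b : σ) (F : Matrix (ι × κ) (ι × κ) R) (x y : ι × (σ → κ)) :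
    siteOp b F x y
      = F (x.1, x.2 b) (y.1, y.2 b) * if ∀ c, c ≠ b → x.2 c = y.2 c then 1 else 0 :=
  rfl

theorem siteOp_auxConj [Fintype ι] [DecidableEq ι] [Fintype κ] (b : σ) (g : ι → Rˣ)
    (F : Matrix (ι × κ) (ι × κ) R) :
    siteOp b (auxConj g F) = auxConj g (siteOp b F) := by
  ext x y
  simp only [siteOp_apply, auxConj_apply]
  ring

theorem blockTriangular_siteOp {α : Type*} [LT α] {φ : ι → α} (b : σ)
    {F : Matrix (ι × κ) (ι × κ) R} (hF : F.BlockTriangular (φ ∘ Prod.fst)) :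
    (siteOp b F).BlockTriangular (φ ∘ Prod.fst) := fun x y hxy => by
  rw [siteOp_apply, hF (i := (x.1, x.2 b)) (j := (y.1, y.2 b)) hxy, zero_mul]

theorem diagBlock_siteOp {b : σ} {F : Matrix (ι × κ) (ι × κ) R} {i : ι} {d : κ → R}
    (hF : diagBlock i F = diagonal d) :
    diagBlock i (siteOp b F) = diagonal fun f => d (f b) := by
  ext f g
  rw [diagBlock_apply, siteOp_apply, ← diagBlock_apply i F, hF]
  have hfg : f = g ↔ f b = g b ∧ ∀ c, c ≠ b → f c = g c :=
    ⟨by rintro rfl; simp, fun h => funext fun c => by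
      obtain rfl | hc := eq_or_ne c b
      exacts [h.1, h.2 c hc]⟩
  simp only [diagonal_apply, hfg, ite_and, mul_ite, mul_one, mul_zero]
  split_ifs <;> rfl

theorem diagBlock_list_prod_siteOp [Fintype ι] [DecidableEq ι] [Fintype κ] {α : Type*}
    [LinearOrder α] {φ : ι → α} (hφ : Function.Injective φ)
    {F : σ → Matrix (ι × κ) (ι × κ) R} (hF : ∀ b, (F b).BlockTriangular (φ ∘ Prod.fst)) {i : ι}
    {d : σ → κ → R} (hd : ∀ b, diagBlock i (F b) = diagonal (d b)) (L : List σ) :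
    diagBlock i (L.map fun b => siteOp b (F b)).prod
      = diagonal fun f => (L.map fun b => d b (f b)).prod := by
  rw [diagBlock_list_prod hφ i
    (by simpa only [List.forall_mem_map] using fun b _ => blockTriangular_siteOp b (hF b)),
    List.map_map]
  simp only [Function.comp_def, diagBlock_siteOp (hd _)]
  have h := map_list_prod (diagonalRingHom (σ → κ) R) (L.map fun b f => d b (f b))
  rw [List.map_map] at h
  refine h.symm.trans (congrArg diagonal (funext fun f => ?_))
  simp [Function.comp_def, Pi.list_prod_apply]

end SiteOperator

section ConstantRMatrix

variable {ι R K : Type*} [LinearOrder ι] [Fintype ι] [CommSemiring R] [Field K]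

/-- The part `∑_{k<p} E_{kp} ⊗ E_{pk}` of the permutation operator, strictly upper triangular in
the auxiliary space. -/
def upperExchange (ι R : Type*) [LinearOrder ι] [Fintype ι] [Semiring R] :
    Matrix (ι × ι) (ι × ι) R :=
  ∑ k : ι, ∑ p : ι, if k < p then single (k, p) (p, k) 1 else 0

theorem blockTriangular_upperExchange : (upperExchange ι R).BlockTriangular Prod.fst := by
  refine sum_mem (S := blockTriangularSubalgebra R R Prod.fst) fun k _ => sum_mem fun p _ => ?_
  split_ifs with hkp
  exacts [blockTriangular_single hkp.le 1, zero_mem _]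

theorem diagBlock_upperExchange (i : ι) : diagBlock i (upperExchange ι R) = 0 := by
  simp only [upperExchange, map_sum]
  refine Finset.sum_eq_zero fun k _ => Finset.sum_eq_zero fun p _ => ?_
  split_ifs with hkp
  · ext a b
    rw [diagBlock_apply, single_apply_of_ne _ _ _ _ _ (by grind), Matrix.zero_apply]
  · exact map_zero _

/-- The constant (spectral parameter free) R-matrix `R(q)` of `U_q(gl_ι)`, upper triangular in the
auxiliary space. -/
def constRMatrix (ι : Type*) [LinearOrder ι] [Fintype ι] (q : K) : Matrix (ι × ι) (ι × ι) K :=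
  diagonal (fun x => if x.1 = x.2 then q else 1)
    + (q - q⁻¹) • upperExchange ι K

theorem blockTriangular_constRMatrix (q : K) : (constRMatrix ι q).BlockTriangular Prod.fst :=
  (blockTriangular_diagonal _).add <|
    (blockTriangularSubalgebra K K Prod.fst).smul_mem blockTriangular_upperExchange _

theorem diagBlock_constRMatrix (q : K) (i : ι) :
    diagBlock i (constRMatrix ι q) = diagonal fun a => if a = i then q else 1 := by
  simp [constRMatrix, diagBlock_upperExchange, eq_comm (a := i)]

end ConstantRMatrix

section RMatrix

/-- The gauge `diag(1, u², u⁴)` removing the principal gradation from the R-matrix. -/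
def principalGauge (u : ℂˣ) (i : Fin 3) : ℂˣ :=
  u ^ (2 * (i : ℤ))

theorem coe_principalGauge (u : ℂˣ) (i : Fin 3) :
    (principalGauge u i : ℂ) = (u : ℂ) ^ (2 * (i : ℤ)) := by
  simp [principalGauge]

theorem principalGauge_mul (u v : ℂˣ) :
    principalGauge (u * v) = principalGauge u * principalGauge v :=
  funext fun _ => mul_zpow u v _

theorem sum_Eb_kronecker_Eb (s t : ℂ) :
    (∑ k : Fin 3, ∑ p : Fin 3, if k = p then s • (Eb k k ⊗ₖ Eb k k) else t • (Eb k k ⊗ₖ Eb p p))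
      = diagonal fun x => if x.1 = x.2 then s else t := by
  rw [← sum_single_eq_diagonal, Fintype.sum_prod_type]
  refine Finset.sum_congr rfl fun k _ => Finset.sum_congr rfl fun p _ => ?_
  split_ifs with hkp <;> simp [Eb, single_kronecker_single, hkp]

theorem smul_auxConj_single (u : ℂˣ) (k p : Fin 3) (e : ℤ) :
    (u : ℂ) ^ e • auxConj (principalGauge u) (single (k, p) (p, k) (1 : ℂ))
      = (u : ℂ) ^ (e - 2 * ((p : ℤ) - (k : ℤ))) • (Eb k p ⊗ₖ Eb p k) := by
  rw [auxConj_single, Units.val_inv_eq_inv_val, coe_principalGauge, coe_principalGauge, Eb, Eb,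
    single_kronecker_single, smul_single, smul_single]
  congr 1
  simp only [mul_one, smul_eq_mul, ← _root_.zpow_neg, ← zpow_add₀ u.ne_zero]
  congr 1
  ring

theorem sum_exchange_eq_auxConj (u : ℂˣ) :
    (∑ k : Fin 3, ∑ p : Fin 3, if k < p then
        (u : ℂ) ^ ((3 : ℤ) - 2 * (((p : ℕ) : ℤ) - ((k : ℕ) : ℤ))) • (Eb k p ⊗ₖ Eb p k)
          + (u : ℂ) ^ (2 * (((p : ℕ) : ℤ) - ((k : ℕ) : ℤ)) - (3 : ℤ)) • (Eb p k ⊗ₖ Eb k p)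
        else 0)
      = auxConj (principalGauge u)
        ((u : ℂ) ^ (3 : ℤ) • upperExchange (Fin 3) ℂ
          + (u : ℂ) ^ (-3 : ℤ) • (upperExchange (Fin 3) ℂ)ᵀ) := by
  simp only [upperExchange, transpose_sum, Finset.smul_sum, ← Finset.sum_add_distrib, map_sum]
  refine Finset.sum_congr rfl fun k _ => Finset.sum_congr rfl fun p _ => ?_
  split_ifs with hkp
  · rw [transpose_single, map_add, map_smul, map_smul, smul_auxConj_single, smul_auxConj_single]
    congr 3
    ring
  · simp

theorem RpM_eq_auxConj (q : ℂ) (u : ℂˣ) :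
    RpM q u = auxConj (principalGauge u)
      ((u : ℂ) ^ 3 • constRMatrix (Fin 3) q
        - ((u : ℂ) ^ 3)⁻¹ • (constRMatrix (Fin 3) q⁻¹)ᵀ) := by
  have hdiag : (diagonal fun x : Fin 3 × Fin 3 =>
        if x.1 = x.2 then (u : ℂ) ^ 3 * q - ((u : ℂ) ^ 3 * q)⁻¹ else (u : ℂ) ^ 3 - ((u : ℂ) ^ 3)⁻¹)
      = (u : ℂ) ^ 3 • (diagonal fun x => if x.1 = x.2 then q else 1)
        - ((u : ℂ) ^ 3)⁻¹ • diagonal fun x => if x.1 = x.2 then q⁻¹ else 1 := by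
    rw [← diagonal_smul, ← diagonal_smul, diagonal_sub]
    congr 1
    funext x
    split_ifs with hx <;> simp [hx, mul_comm]
  rw [RpM, sum_Eb_kronecker_Eb, sum_exchange_eq_auxConj, hdiag]
  simp only [constRMatrix, transpose_add, transpose_smul, diagonal_transpose, map_add, map_sub,
    map_smul, auxConj_diagonal, inv_inv, _root_.zpow_neg, zpow_ofNat]
  module

/-- The coefficient of `u³` in the gauged R-matrix `R_q(u/z)`. -/
noncomputable def RpMUpper (q : ℂ) (z : ℂˣ) : Matrix (Fin 3 × Fin 3) (Fin 3 × Fin 3) ℂ :=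
  ((z : ℂ) ^ 3)⁻¹ • auxConj (principalGauge z⁻¹) (constRMatrix (Fin 3) q)

/-- The coefficient of `u⁻³` in the gauged R-matrix `R_q(u/z)`. -/
noncomputable def RpMLower (q : ℂ) (z : ℂˣ) : Matrix (Fin 3 × Fin 3) (Fin 3 × Fin 3) ℂ :=
  -(z : ℂ) ^ 3 • auxConj (principalGauge z⁻¹) (constRMatrix (Fin 3) q⁻¹)ᵀ

theorem RpM_div_eq_auxConj (q : ℂ) (u z : ℂˣ) :
    RpM q (u / z) = auxConj (principalGauge u)
      (((u : ℂ) ^ 3)⁻¹ • (RpMLower q z + (u : ℂ) ^ 6 • RpMUpper q z)) := by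
  have hu := u.ne_zero
  rw [div_eq_mul_inv, ← Units.val_inv_eq_inv_val, ← Units.val_mul, RpM_eq_auxConj,
    principalGauge_mul, auxConj_mul]
  congr 1
  simp only [RpMLower, RpMUpper, map_sub, map_smul, smul_add, smul_smul, Units.val_mul,
    Units.val_inv_eq_inv_val]
  match_scalars <;> field_simp

theorem blockTriangular_RpMUpper (q : ℂ) (z : ℂˣ) :
    (RpMUpper q z).BlockTriangular (id ∘ Prod.fst) :=
  (blockTriangularSubalgebra ℂ ℂ _).smul_mem
    (blockTriangular_auxConj _ (blockTriangular_constRMatrix q)) _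

theorem blockTriangular_RpMLower (q : ℂ) (z : ℂˣ) :
    (RpMLower q z).BlockTriangular (OrderDual.toDual ∘ Prod.fst) :=
  (blockTriangularSubalgebra ℂ ℂ _).smul_mem
    (blockTriangular_auxConj _ (blockTriangular_constRMatrix q⁻¹).transpose) _

theorem diagBlock_RpMUpper (q : ℂ) (z : ℂˣ) (i : Fin 3) :
    diagBlock i (RpMUpper q z)
      = diagonal fun a => ((z : ℂ) ^ 3)⁻¹ * if a = i then q else 1 := by
  rw [RpMUpper, map_smul, diagBlock_auxConj, diagBlock_constRMatrix, ← diagonal_smul]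
  rfl

theorem diagBlock_RpMLower (q : ℂ) (z : ℂˣ) (i : Fin 3) :
    diagBlock i (RpMLower q z)
      = diagonal fun a => -(z : ℂ) ^ 3 * if a = i then q⁻¹ else 1 := by
  rw [RpMLower, map_smul, diagBlock_auxConj, diagBlock_transpose, diagBlock_constRMatrix,
    diagonal_transpose, ← diagonal_smul]
  rfl

end RMatrix

section TransferMatrix

variable {N : ℕ}

/-- The polynomial in `u⁶` that gives, up to the factor `u^{-3N}`, the product of gauged R-matrices
in the monodromy matrix. -/
noncomputable def monodromyPoly (q : ℂ) (ζ : Fin N → ℂˣ) :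
    Polynomial (Matrix (Fin 3 × HIdx N) (Fin 3 × HIdx N) ℂ) :=
  pencilProd (fun b => siteOp b (RpMUpper q (ζ b))) (fun b => siteOp b (RpMLower q (ζ b)))
    (List.finRange N).reverse

theorem Raux_eq_siteOp (q u : ℂ) (b : Fin N) : Raux N q u b = siteOp b (RpM q u) := by
  ext x y
  simp only [Raux, siteOp_apply, of_apply]
  congr

theorem list_prod_Raux_eq_auxConj (q : ℂ) (ζ : Fin N → ℂˣ) (u : ℂˣ) :
    ((List.finRange N).reverse.map fun b => Raux N q (u / ζ b) b).prod
      = auxConj (principalGauge u) ((u : ℂ) ^ (-(3 * (N : ℤ))) •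
          ∑ m : Fin (N + 1), (u : ℂ) ^ (6 * (m : ℕ)) • (monodromyPoly q ζ).coeff m) := by
  have hscale : (u : ℂ) ^ (-(3 * (N : ℤ))) = (((u : ℂ) ^ 3)⁻¹) ^ N := by
    rw [_root_.zpow_neg, _root_.zpow_mul, inv_pow, zpow_natCast, zpow_ofNat]
  have hpencil := list_prod_add_smul_eq_sum (fun b => siteOp b (RpMUpper q (ζ b)))
    (fun b => siteOp b (RpMLower q (ζ b))) (List.finRange N).reverse ((u : ℂ) ^ 6)
  simp only [List.length_reverse, List.length_finRange, Finset.sum_range, ← pow_mul] at hpencil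
  rw [hscale, monodromyPoly, ← hpencil]
  have hsmul := List.smul_prod ((List.finRange N).reverse.map fun b =>
    auxConj (principalGauge u)
      (siteOp b (RpMLower q (ζ b)) + (u : ℂ) ^ 6 • siteOp b (RpMUpper q (ζ b)))) ((u : ℂ) ^ 3)⁻¹
  rw [List.length_map, List.length_reverse, List.length_finRange, List.map_map] at hsmul
  rw [map_smul, map_list_prod, List.map_map]
  refine Eq.trans ?_ hsmul.symm
  simp only [Function.comp_def, Raux_eq_siteOp, RpM_div_eq_auxConj, siteOp_auxConj, map_smul,
    map_add]

theorem T1_diagonal_eq_twistedAuxTrace (q : ℂ) (ζ : Fin N → ℂ) (d : Fin 3 → ℂ) (u : ℂ) :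
    T1 N q ζ (diagonal d) u
      = twistedAuxTrace d ((List.finRange N).reverse.map fun b => Raux N q (u / ζ b) b).prod := by
  have hK : Kaux N (diagonal d) = diagonal fun x => d x.1 := by
    ext ⟨i, f⟩ ⟨j, g⟩
    by_cases hij : i = j <;> by_cases hfg : f = g <;> simp [Kaux, hij, hfg]
  ext f g
  simp [T1, Mon, hK, twistedAuxTrace_apply, Matrix.sum_apply]

theorem T1_diagonal_eq_sum (q : ℂ) (ζ : Fin N → ℂˣ) (d : Fin 3 → ℂ) (u : ℂˣ) :
    T1 N q (fun b => ζ b) (diagonal d) u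
      = (u : ℂ) ^ (-(3 * (N : ℤ))) • ∑ m : Fin (N + 1),
          (u : ℂ) ^ (6 * (m : ℕ)) • twistedAuxTrace d ((monodromyPoly q ζ).coeff m) := by
  simp only [T1_diagonal_eq_twistedAuxTrace, list_prod_Raux_eq_auxConj, twistedAuxTrace_auxConj,
    map_smul, map_sum]

theorem Dop_inv (q : ℂ) (i : Fin 3) : Dop N q⁻¹ i = DopInv N q i := by
  simp only [Dop, DopInv, inv_pow]

theorem diagonal_list_prod_eq_smul_Dop (q : ℂ) (s : Fin N → ℂ) (i : Fin 3) :
    (diagonal fun f : HIdx N =>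
        ((List.finRange N).reverse.map fun b => s b * if f b = i then q else 1).prod)
      = (∏ b, s b) • Dop N q i := by
  rw [Dop, ← diagonal_smul]
  congr 1
  funext f
  rw [((List.reverse_perm _).map _).prod_eq, ← List.ofFn_eq_map, List.prod_ofFn,
    Finset.prod_mul_distrib]
  simp [Finset.prod_ite, cnt]

theorem twistedAuxTrace_monodromyPoly_coeff_last (q : ℂ) (ζ : Fin N → ℂˣ) (d : Fin 3 → ℂ) :
    twistedAuxTrace d ((monodromyPoly q ζ).coeff N)
      = (∏ b, (ζ b : ℂ) ^ 3)⁻¹ • ∑ i, d i • Dop N q i := by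
  have hcoeff := pencilProd_coeff_length (fun b => siteOp b (RpMUpper q (ζ b)))
    (fun b => siteOp b (RpMLower q (ζ b))) (List.finRange N).reverse
  rw [List.length_reverse, List.length_finRange] at hcoeff
  simp only [monodromyPoly, hcoeff, twistedAuxTrace_apply, diagBlock_list_prod_siteOp
    Function.injective_id (fun b => blockTriangular_RpMUpper q (ζ b))
    (fun b => diagBlock_RpMUpper q (ζ b) _), diagonal_list_prod_eq_smul_Dop,
    Finset.prod_inv_distrib, Finset.smul_sum, smul_comm (d _)]

theorem twistedAuxTrace_monodromyPoly_coeff_zero (q : ℂ) (ζ : Fin N → ℂˣ) (d : Fin 3 → ℂ) :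
    twistedAuxTrace d ((monodromyPoly q ζ).coeff 0)
      = ((-1) ^ N * ∏ b, (ζ b : ℂ) ^ 3) • ∑ i, d i • DopInv N q i := by
  simp only [monodromyPoly, pencilProd_coeff_zero, twistedAuxTrace_apply,
    diagBlock_list_prod_siteOp OrderDual.toDual.injective
      (fun b => blockTriangular_RpMLower q (ζ b)) (fun b => diagBlock_RpMLower q (ζ b) _),
    diagonal_list_prod_eq_smul_Dop, Dop_inv, Finset.prod_neg, Finset.card_univ, Fintype.card_fin,
    Finset.smul_sum, smul_comm (d _)]

end TransferMatrix

/-- Laurent polynomial structure and asymptotics of `T₁` for the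
diagonal twist `K = diag(α, β, γ)`. -/
theorem T1_Laurent_structure_diagonal_twist (N : ℕ) (hN : 1 ≤ N) (q p : ℂ)
    (hq : q ≠ 0) (hq2 : q ^ 2 ≠ 1) (hp : p ^ 3 = q)
    (ζ : Fin N → ℂ) (hζ : ∀ b, ζ b ≠ 0) (α β γ : ℂ) :
    ∃ c : Fin (N + 1) → Matrix (HIdx N) (HIdx N) ℂ,
      (∀ u : ℂ, u ≠ 0 →
        T1 N q ζ (Ktw1 α β γ) u
          = u ^ (-(3 * (N : ℤ))) • ∑ m : Fin (N + 1), u ^ (6 * (m : ℕ)) • c m)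
      ∧ c (Fin.last N)
          = (∏ n, ζ n ^ 3)⁻¹ • (α • Dop N q 0 + β • Dop N q 1 + γ • Dop N q 2)
      ∧ c 0
          = ((-1 : ℂ) ^ N * ∏ n, ζ n ^ 3)
              • (α • DopInv N q 0 + β • DopInv N q 1 + γ • DopInv N q 2) := by
  lift ζ to Fin N → ℂˣ using fun b => (hζ b).isUnit
  refine ⟨fun m => twistedAuxTrace ![α, β, γ] ((monodromyPoly q ζ).coeff m), fun u hu => ?_, ?_, ?_⟩
  · lift u to ℂˣ using hu.isUnit
    exact T1_diagonal_eq_sum q ζ ![α, β, γ] u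
  · simpa [Fin.sum_univ_three] using twistedAuxTrace_monodromyPoly_coeff_last q ζ ![α, β, γ]
  · simpa [Fin.sum_univ_three] using twistedAuxTrace_monodromyPoly_coeff_zero q ζ ![α, β, γ]
end

section
/- Reconstruction of the fused transfer matrix from the fundamental one (diagonal twist): assume in addition that K = diag(α, β, γ), and that for all n ≠ b one has ξ_n² ≠ ξ_b² and ξ_n² ≠ q² ξ_b². Then for all u ≠ 0, writing λ = u³: T₂(u) = (1/2)[αβ(D₁D₂ + (D₁D₂)⁻¹) + αγ(D₁D₃ + (D₁D₃)⁻¹) + βγ(D₂D₃ + (D₂D₃)⁻¹)] ∏_{b=1}^{N} (λ/ξ_b − ξ_b/λ)(λ/(qξ_b) − qξ_b/λ) + Σ_{n=1}^{N} f_n(λ) T₁(ζ_n/p) T₁(ζ_n), where f_n(λ) = ((λ/ξ_n + ξ_n/λ)/2) · ∏_{b=1}^{N} (λ/(qξ_b) − qξ_b/λ)/(ξ_n/(qξ_b) − qξ_b/ξ_n) · ∏_{b=1, b≠n}^{N} (λ/ξ_b − ξ_b/λ)/(ξ_n/ξ_b − ξ_b/ξ_n). -/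
open Matrix Kronecker BigOperators

/-!
Fusion: `R_b(u) R_a(u/p)` preserves the q-antisymmetric subspace of the two auxiliary spaces and
acts there as a scalar times a fused R-matrix, so `T₂(u) = c(u) τ(u)` with `c` a product of scalars
and `τ` the transfer matrix of the fused R-matrices. At `u = ζₙ`, site `n` contributes `R(1)`, a
multiple of a permutation, next to `R(p⁻¹)`, a multiple of the antisymmetrizer. Hence the product of
the two monodromy matrices absorbs the antisymmetrizer, and `T₁(ζₙ/p) T₁(ζₙ) = c(ζₙ) τ(ζₙ)`.

A diagonal gauge turns the fused R-matrix at `u/ζ_b` into `λ X_b + λ⁻¹ Y_b` with `X_b` lower and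
`Y_b` upper triangular over the auxiliary space. Hence `λ^N τ` is a polynomial of degree at most `N`
in `λ²` whose extreme coefficients are diagonal operators built from the `D_i`. Interpolating it at
the `N` points `ξₙ²` together with its leading coefficient gives one formula, together with its
constant coefficient another; the theorem is their mean.
-/

section Interpolation

open Polynomial

variable {K ι : Type*} [Field K] {s : Finset ι} {x : ι → K}

theorem eval_sub_C_mul_nodal_node (P : K[X]) (c : K) {n : ι} (hn : n ∈ s) :
    (P - C c * Lagrange.nodal s x).eval (x n) = P.eval (x n) := by
  simp [Lagrange.eval_nodal_at_node hn]

theorem div_sub_div_eq_sq_sub_sq_div {a b : K} (ha : a ≠ 0) (hb : b ≠ 0) :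
    a / b - b / a = (a ^ 2 - b ^ 2) / (a * b) := by
  field_simp

variable [DecidableEq ι]

theorem eval_eq_sum_of_degree_lt {P : K[X]} (hx : Set.InjOn x s) (hP : P.degree < s.card) (z : K) :
    P.eval z = ∑ n ∈ s, P.eval (x n) * ∏ b ∈ s.erase n, (z - x b) / (x n - x b) := by
  conv_lhs => rw [Lagrange.eq_interpolate hx hP]
  simp [Lagrange.interpolate_apply, eval_finsetSum, Lagrange.basis, eval_prod,
    Lagrange.basisDivisor, div_eq_inv_mul]

theorem eval_eq_leadingCoeff_mul_add_sum {P : K[X]} (hx : Set.InjOn x s)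
    (hP : P.natDegree ≤ s.card) (z : K) :
    P.eval z = P.coeff s.card * ∏ b ∈ s, (z - x b)
      + ∑ n ∈ s, P.eval (x n) * ∏ b ∈ s.erase n, (z - x b) / (x n - x b) := by
  set Q := P - C (P.coeff s.card) * Lagrange.nodal s x with hQ
  have hnodal : (Lagrange.nodal s x).natDegree = s.card := Lagrange.natDegree_nodal
  have hlead : (Lagrange.nodal s x).coeff s.card = 1 :=
    hnodal ▸ Lagrange.nodal_monic.coeff_natDegree
  have hdeg : Q.degree < s.card := by
    refine (degree_lt_iff_coeff_zero _ _).2 fun m hm => ?_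
    rcases hm.eq_or_lt with rfl | hm
    · simp [hQ, hlead]
    · simp [hQ, coeff_eq_zero_of_natDegree_lt (hP.trans_lt hm),
        coeff_eq_zero_of_natDegree_lt (hnodal.trans_lt hm)]
  have hsum := eval_eq_sum_of_degree_lt hx hdeg z
  rw [Finset.sum_congr rfl fun n hn => by rw [eval_sub_C_mul_nodal_node P _ hn]] at hsum
  rw [← hsum, hQ, eval_sub, eval_C_mul, Lagrange.eval_nodal, add_sub_cancel]

theorem eval_eq_constantCoeff_mul_add_sum {P : K[X]} (hx : Set.InjOn x s)
    (hx0 : ∀ b ∈ s, x b ≠ 0) (hP : P.natDegree ≤ s.card) (z : K) :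
    P.eval z = P.coeff 0 / (∏ b ∈ s, -x b) * ∏ b ∈ s, (z - x b)
      + ∑ n ∈ s, P.eval (x n) * (z / x n * ∏ b ∈ s.erase n, (z - x b) / (x n - x b)) := by
  set c := P.coeff 0 / ∏ b ∈ s, -x b with hc
  set Q := P - C c * Lagrange.nodal s x with hQ
  have hprod : ∏ b ∈ s, -x b ≠ 0 := Finset.prod_ne_zero_iff.2 fun b hb => neg_ne_zero.2 (hx0 b hb)
  have hQ0 : Q.coeff 0 = 0 := by
    rw [hQ, coeff_sub, coeff_C_mul, coeff_zero_eq_eval_zero (Lagrange.nodal s x),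
      Lagrange.eval_nodal]
    simp [hc, div_mul_cancel₀ _ hprod]
  have hQX (y : K) : Q.eval y = y * Q.divX.eval y := by
    conv_lhs => rw [← X_mul_divX_add Q, hQ0]
    simp
  have hdeg : Q.divX.degree < s.card := by
    refine (degree_lt_iff_coeff_zero _ _).2 fun m hm => ?_
    have hnodal : (Lagrange.nodal s x).natDegree < m + 1 := by
      rw [Lagrange.natDegree_nodal]; lia
    simp [coeff_divX, hQ, coeff_eq_zero_of_natDegree_lt hnodal,
      coeff_eq_zero_of_natDegree_lt (show P.natDegree < m + 1 by lia)]
  have hterm (n : ι) (hn : n ∈ s) : Q.divX.eval (x n) = P.eval (x n) / x n := by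
    rw [← eval_sub_C_mul_nodal_node P c hn, ← hQ, hQX, mul_div_cancel_left₀ _ (hx0 n hn)]
  calc P.eval z = c * ∏ b ∈ s, (z - x b) + z * Q.divX.eval z := by
        rw [← hQX, hQ, eval_sub, eval_C_mul, Lagrange.eval_nodal, add_sub_cancel]
    _ = _ := by
        rw [eval_eq_sum_of_degree_lt hx hdeg, Finset.mul_sum]
        congr 1
        refine Finset.sum_congr rfl fun n hn => ?_
        rw [hterm n hn]
        ring

theorem prod_div_sub_div_ratio {ξ : ι → K} (hξ : ∀ b ∈ s, ξ b ≠ 0) {t : K} (ht : t ≠ 0) {n : ι}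
    (hn : n ∈ s) :
    ∏ b ∈ s.erase n, (t / ξ b - ξ b / t) / (ξ n / ξ b - ξ b / ξ n)
      = (ξ n / t) ^ (s.card - 1) * ∏ b ∈ s.erase n, (t ^ 2 - ξ b ^ 2) / (ξ n ^ 2 - ξ b ^ 2) := by
  rw [← Finset.card_erase_of_mem hn, ← Finset.prod_const, ← Finset.prod_mul_distrib]
  refine Finset.prod_congr rfl fun b hb => ?_
  have hb0 := hξ b (Finset.mem_of_mem_erase hb)
  have hn0 := hξ n hn
  rw [div_sub_div_eq_sq_sub_sq_div ht hb0, div_sub_div_eq_sq_sub_sq_div hn0 hb0]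
  by_cases h : ξ n ^ 2 - ξ b ^ 2 = 0
  · simp [h]
  · field_simp

variable [NeZero (2 : K)]

theorem eval_eq_mean_coeff_mul_add_sum {P : K[X]} (hx : Set.InjOn x s)
    (hx0 : ∀ b ∈ s, x b ≠ 0) (hP : P.natDegree ≤ s.card) (z : K) :
    P.eval z = (P.coeff s.card + P.coeff 0 / ∏ b ∈ s, -x b) / 2 * ∏ b ∈ s, (z - x b)
      + ∑ n ∈ s, P.eval (x n)
          * ((1 + z / x n) / 2 * ∏ b ∈ s.erase n, (z - x b) / (x n - x b)) := by
  have hupper := eval_eq_leadingCoeff_mul_add_sum hx hP z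
  have hlower := eval_eq_constantCoeff_mul_add_sum hx hx0 hP z
  have hmean : ∑ n ∈ s, P.eval (x n)
        * ((1 + z / x n) / 2 * ∏ b ∈ s.erase n, (z - x b) / (x n - x b))
      = (∑ n ∈ s, P.eval (x n) * ∏ b ∈ s.erase n, (z - x b) / (x n - x b)
        + ∑ n ∈ s, P.eval (x n) * (z / x n * ∏ b ∈ s.erase n, (z - x b) / (x n - x b))) / 2 := by
    rw [← Finset.sum_add_distrib, Finset.sum_div]
    exact Finset.sum_congr rfl fun n _ => by ring
  rw [hmean]
  linear_combination (hupper + hlower) / 2 - add_halves (P.eval z)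

theorem inv_pow_mul_eval_sq_eq_mean_coeff_mul_add_sum {P : K[X]} {ξ : ι → K}
    (hξ : Set.InjOn (fun b => ξ b ^ 2) s) (hξ0 : ∀ b ∈ s, ξ b ≠ 0) (hP : P.natDegree ≤ s.card)
    {t : K} (ht : t ≠ 0) :
    (t ^ s.card)⁻¹ * P.eval (t ^ 2)
      = (P.coeff s.card * ∏ b ∈ s, ξ b + P.coeff 0 / ∏ b ∈ s, -ξ b) / 2
          * ∏ b ∈ s, (t / ξ b - ξ b / t)
        + ∑ n ∈ s, ((t / ξ n + ξ n / t) / 2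
            * ∏ b ∈ s.erase n, (t / ξ b - ξ b / t) / (ξ n / ξ b - ξ b / ξ n))
            * ((ξ n ^ s.card)⁻¹ * P.eval (ξ n ^ 2)) := by
  have hprod : ∏ b ∈ s, ξ b ≠ 0 := Finset.prod_ne_zero_iff.2 hξ0
  have hprod' : ∏ b ∈ s, -ξ b ≠ 0 := Finset.prod_ne_zero_iff.2 fun b hb => neg_ne_zero.2 (hξ0 b hb)
  have hnodes : ∏ b ∈ s, (t / ξ b - ξ b / t)
      = (∏ b ∈ s, (t ^ 2 - ξ b ^ 2)) / (t ^ s.card * ∏ b ∈ s, ξ b) := by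
    rw [← Finset.prod_const, ← Finset.prod_mul_distrib, ← Finset.prod_div_distrib]
    exact Finset.prod_congr rfl fun b hb => div_sub_div_eq_sq_sub_sq_div ht (hξ0 b hb)
  have hsq : ∏ b ∈ s, -(ξ b ^ 2) = (∏ b ∈ s, ξ b) * ∏ b ∈ s, -ξ b := by
    rw [← Finset.prod_mul_distrib]
    exact Finset.prod_congr rfl fun b _ => by ring
  rw [eval_eq_mean_coeff_mul_add_sum hξ (fun b hb => pow_ne_zero 2 (hξ0 b hb)) hP (t ^ 2), mul_add,
    Finset.mul_sum, hnodes, hsq]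
  congr 1
  · field_simp
  · refine Finset.sum_congr rfl fun n hn => ?_
    have hn0 := hξ0 n hn
    obtain ⟨m, hm⟩ := Nat.exists_eq_add_one_of_ne_zero (Finset.card_ne_zero_of_mem hn)
    rw [prod_div_sub_div_ratio hξ0 ht hn, hm, Nat.add_sub_cancel, div_pow]
    simp only [pow_succ]
    field_simp
    ring

end Interpolation

section AlgebraInterpolation

open Polynomial

theorem exists_polynomial_linearMap_list_prod {R B β : Type*} [CommSemiring R] [Semiring B]
    [Algebra R B] (X Y : β → B) (l : List β) (φ : B →ₗ[R] R) :
    ∃ P : R[X], P.natDegree ≤ l.length ∧ P.coeff l.length = φ (l.map X).prod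
      ∧ P.coeff 0 = φ (l.map Y).prod
      ∧ ∀ t, P.eval t = φ (l.map fun b => t • X b + Y b).prod := by
  induction l generalizing φ with
  | nil => exact ⟨C (φ 1), by simp, by simp, by simp, by simp⟩
  | cons b l ih =>
    obtain ⟨P, hPdeg, hPtop, -, hPeval⟩ := ih (φ ∘ₗ LinearMap.mulLeft R (X b))
    obtain ⟨Q, hQdeg, -, hQbot, hQeval⟩ := ih (φ ∘ₗ LinearMap.mulLeft R (Y b))
    refine ⟨Polynomial.X * P + Q, ?_, ?_, ?_, fun t => ?_⟩
    · exact natDegree_add_le_of_degree_le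
        ((natDegree_mul_le_of_le natDegree_X_le hPdeg).trans (by simp [add_comm]))
        (hQdeg.trans (by simp))
    · simp [hPtop, coeff_eq_zero_of_natDegree_lt (Nat.lt_succ_of_le hQdeg)]
    · simp [hQbot]
    · simp [hPeval, hQeval, add_mul]

variable {K B ι β : Type*} [Field K] [NeZero (2 : K)] [Ring B] [Algebra K B] [DecidableEq ι]
  {s : Finset ι} {ξ : ι → K}

theorem list_prod_smul_add_inv_smul_eq_mean_add_sum (hξ : Set.InjOn (fun b => ξ b ^ 2) s)
    (hξ0 : ∀ b ∈ s, ξ b ≠ 0) (X Y : β → B) {l : List β} (hl : l.length = s.card) {t : K}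
    (ht : t ≠ 0) :
    (l.map fun b => t • X b + t⁻¹ • Y b).prod
      = (∏ b ∈ s, (t / ξ b - ξ b / t))
          • (1 / 2 : K) • ((∏ b ∈ s, ξ b) • (l.map X).prod + (∏ b ∈ s, -ξ b)⁻¹ • (l.map Y).prod)
        + ∑ n ∈ s, ((t / ξ n + ξ n / t) / 2
            * ∏ b ∈ s.erase n, (t / ξ b - ξ b / t) / (ξ n / ξ b - ξ b / ξ n))
            • (l.map fun b => ξ n • X b + (ξ n)⁻¹ • Y b).prod := by
  refine sub_eq_zero.1 ((Module.forall_dual_apply_eq_zero_iff K _).1 fun φ => ?_)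
  rw [map_sub, sub_eq_zero]
  obtain ⟨P, hdeg, htop, hbot, heval⟩ := exists_polynomial_linearMap_list_prod X Y l φ
  have hlaurent {r : K} (hr : r ≠ 0) :
      φ (l.map fun b => r • X b + r⁻¹ • Y b).prod = (r ^ s.card)⁻¹ * P.eval (r ^ 2) := by
    have hfactor : (l.map fun b => r • X b + r⁻¹ • Y b)
        = (l.map fun b => r ^ 2 • X b + Y b).map (r⁻¹ • ·) := by
      simp only [List.map_map, Function.comp_def, smul_add, smul_smul]
      congr! 4
      field_simp
    rw [hfactor, ← List.smul_prod, map_smul, ← heval, List.length_map, hl, inv_pow, smul_eq_mul]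
  simp only [map_add, map_smul, map_sum, smul_eq_mul]
  rw [hlaurent ht, inv_pow_mul_eval_sq_eq_mean_coeff_mul_add_sum hξ hξ0 (hl ▸ hdeg) ht,
    ← hl, htop, hbot]
  congr 1
  · ring
  · refine Finset.sum_congr rfl fun n hn => ?_
    rw [hlaurent (hξ0 n hn), hl]

end AlgebraInterpolation

section NoncommutativeEntries

variable {A ι l m n : Type*}

theorem commute_mul_apply [NonUnitalSemiring A] [Fintype m] {a : A} {X : Matrix l m A}
    {Y : Matrix m n A} (hX : ∀ i j, Commute a (X i j)) (hY : ∀ i j, Commute a (Y i j))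
    (i : l) (j : n) : Commute a ((X * Y) i j) := by
  rw [Matrix.mul_apply]
  exact Commute.sum_right _ _ _ fun k _ => (hX i k).mul_right (hY k j)

theorem kronecker_mul_of_commute [NonUnitalSemiring A] [Fintype m] [Fintype n]
    (X X' : Matrix m m A) (Y Y' : Matrix n n A) (h : ∀ i j k l, Commute (X' i j) (Y k l)) :
    (X * X') ⊗ₖ (Y * Y') = (X ⊗ₖ Y) * (X' ⊗ₖ Y') := by
  ext s t
  simp only [Matrix.kroneckerMap_apply, Matrix.mul_apply, Fintype.sum_prod_type,
    Finset.sum_mul_sum]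
  refine Finset.sum_congr rfl fun i _ => Finset.sum_congr rfl fun j _ => ?_
  rw [mul_assoc, mul_assoc, ← mul_assoc (X' i t.1), (h i t.1 s.2 j).eq, mul_assoc]

theorem trace_mul_comm_of_commute [NonUnitalNonAssocSemiring A] [Fintype m] [Fintype n]
    (X : Matrix m n A) (Y : Matrix n m A) (h : ∀ i j k l, Commute (X i j) (Y k l)) :
    (X * Y).trace = (Y * X).trace := by
  simp only [Matrix.trace, Matrix.diag_apply, Matrix.mul_apply]
  rw [Finset.sum_comm]
  exact Finset.sum_congr rfl fun i _ => Finset.sum_congr rfl fun j _ => (h _ _ _ _).eq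

section Trace

variable [Semiring A] [Fintype m] [Fintype n] [DecidableEq n] {V : Matrix m n A} {W : Matrix n m A}

theorem trace_projector_mul_eq {Z : Matrix m m A} {L : Matrix n n A}
    (hV : ∀ (a : A) i j, Commute a (V i j)) (hWV : W * V = 1) (hZ : Z * V = V * L) :
    (V * W * Z).trace = L.trace := by
  rw [Matrix.mul_assoc, trace_mul_comm_of_commute V _ fun i j k l => (hV _ _ _).symm,
    Matrix.mul_assoc, hZ, ← Matrix.mul_assoc, hWV, Matrix.one_mul]

theorem trace_eq_of_mul_projector_eq {Z : Matrix m m A} {L : Matrix n n A}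
    (hW : ∀ (a : A) i j, Commute a (W i j)) (hWV : W * V = 1) (hZ : W * Z = L * W)
    (hproj : Z * V * W = Z) : Z.trace = L.trace := by
  rw [← hproj, trace_mul_comm_of_commute _ W fun i j k l => hW _ _ _, ← Matrix.mul_assoc, hZ,
    Matrix.mul_assoc, hWV, Matrix.mul_one]

end Trace

variable [Semiring A] [Fintype m] [DecidableEq m]

theorem commute_list_prod_apply {a : A} (X : ι → Matrix m m A) (l : List ι)
    (hX : ∀ b ∈ l, ∀ i j, Commute a (X b i j)) (i j : m) : Commute a ((l.map X).prod i j) := by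
  induction l generalizing i j with
  | nil =>
    rw [List.map_nil, List.prod_nil, Matrix.one_apply]
    split_ifs
    · exact Commute.one_right a
    · exact Commute.zero_right a
  | cons b l ih =>
    rw [List.map_cons, List.prod_cons]
    exact commute_mul_apply (hX b (by simp)) (ih fun c hc => hX c (by simp [hc])) i j

theorem list_prod_apply_self_of_blockTriangular {κ : Type*} [LinearOrder κ] {w : m → κ}
    (hw : Function.Injective w) {X : ι → Matrix m m A} (hX : ∀ b, (X b).BlockTriangular w)
    (l : List ι) (i : m) : (l.map X).prod i i = (l.map fun b => X b i i).prod := by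
  induction l with
  | nil => simp
  | cons b l ih =>
    have htail : (l.map X).prod.BlockTriangular w :=
      list_prod_mem (S := Matrix.blockTriangularSubsemiring A w) (by simpa using fun b _ => hX b)
    rw [List.map_cons, List.prod_cons, Matrix.mul_apply, Finset.sum_eq_single i, ih, List.map_cons,
      List.prod_cons]
    · intro k _ hk
      rcases (hw.ne hk).lt_or_gt with hk | hk
      · rw [hX b hk, zero_mul]
      · rw [htail hk, mul_zero]
    · simp

theorem trace_diagonal_mul (d : m → A) (X : Matrix m m A) :
    (Matrix.diagonal d * X).trace = ∑ k, d k * X k k := by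
  simp [Matrix.trace, Matrix.diagonal_mul]

variable [Fintype n] [DecidableEq n]

theorem kronecker_list_prod (X : ι → Matrix m m A) (Y : ι → Matrix n n A)
    (h : ∀ b c, b ≠ c → ∀ i j k l, Commute (X b i j) (Y c k l)) {l : List ι} (hl : l.Nodup) :
    (l.map X).prod ⊗ₖ (l.map Y).prod = (l.map fun b => X b ⊗ₖ Y b).prod := by
  induction l with
  | nil => simp
  | cons b l ih =>
    rw [List.nodup_cons] at hl
    simp only [List.map_cons, List.prod_cons]
    rw [kronecker_mul_of_commute, ih hl.2]
    refine fun i j k k' => (commute_list_prod_apply X l (fun c hc i j => ?_) i j).symm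
    exact (h c b (fun hcb => hl.1 (hcb ▸ hc)) i j k k').symm

theorem list_prod_mul_eq_mul_list_prod {X : ι → Matrix m m A} {Y : ι → Matrix n n A}
    {V : Matrix m n A} (h : ∀ b, X b * V = V * Y b) (l : List ι) :
    (l.map X).prod * V = V * (l.map Y).prod := by
  induction l with
  | nil => simp
  | cons b l ih =>
    rw [List.map_cons, List.prod_cons, Matrix.mul_assoc, ih, ← Matrix.mul_assoc, h,
      Matrix.mul_assoc, List.map_cons, List.prod_cons]

theorem list_prod_mul_projector_of_mem {V : Matrix m n A} {W : Matrix n m A}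
    {X : ι → Matrix m m A} {L : ι → Matrix n n A}
    (hWV : W * V = 1) (h : ∀ b, W * X b = L b * W) {l : List ι} {c : ι} (hc : c ∈ l)
    (hXc : X c * V * W = X c) : (l.map X).prod * V * W = (l.map X).prod := by
  obtain ⟨l₁, l₂, rfl⟩ := List.append_of_mem hc
  have htail : W * (l₂.map X).prod = (l₂.map L).prod * W :=
    (list_prod_mul_eq_mul_list_prod (fun b => (h b).symm) l₂).symm
  have habsorb : X c * (l₂.map X).prod = X c * V * (l₂.map L).prod * W := by
    rw [Matrix.mul_assoc, ← htail, ← Matrix.mul_assoc, hXc]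
  have hproj : X c * (l₂.map X).prod * V * W = X c * (l₂.map X).prod := by
    rw [habsorb, Matrix.mul_assoc _ W V, hWV, Matrix.mul_one]
  simp only [List.map_append, List.map_cons, List.prod_append, List.prod_cons]
  rw [Matrix.mul_assoc, Matrix.mul_assoc, ← Matrix.mul_assoc _ V W, hproj]

end NoncommutativeEntries

theorem list_prod_smul {R B ι : Type*} [CommSemiring R] [Semiring B] [Algebra R B] (c : ι → R)
    (X : ι → B) (l : List ι) :
    (l.map fun b => c b • X b).prod = (l.map c).prod • (l.map X).prod := by
  induction l with
  | nil => simp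
  | cons b l ih => simp only [List.map_cons, List.prod_cons, ih, smul_mul_smul_comm]

theorem list_prod_finRange_reverse {N : ℕ} {M : Type*} [CommMonoid M] (F : Fin N → M) :
    ((List.finRange N).reverse.map F).prod = ∏ b, F b := by
  rw [← List.prod_toFinset F (List.nodup_reverse.2 (List.nodup_finRange N))]
  congr 1
  ext b
  simp

theorem map_kronecker {A B F l m n o : Type*} [Mul A] [Mul B] [FunLike F A B] [MulHomClass F A B]
    (f : F) (X : Matrix l m A) (Y : Matrix n o A) : (X ⊗ₖ Y).map f = X.map f ⊗ₖ Y.map f := by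
  ext
  simp

theorem kronecker_conjTranspose_eq_submatrix_swap {A l m n o : Type*} [NonUnitalSemiring A]
    [StarRing A] (X : Matrix l m A) (Y : Matrix n o A) :
    (X ⊗ₖ Y)ᴴ = (Yᴴ ⊗ₖ Xᴴ).submatrix Prod.swap Prod.swap := by
  ext ⟨i, j⟩ ⟨k, l⟩
  simp

section SubmatrixSwap

variable {A ι m : Type*} [Semiring A] [Fintype m]

theorem submatrix_swap_mul_submatrix_swap (X Y : Matrix (m × m) (m × m) A) :
    X.submatrix Prod.swap Prod.swap * Y.submatrix Prod.swap Prod.swap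
      = (X * Y).submatrix Prod.swap Prod.swap :=
  submatrix_mul_equiv X Y Prod.swap (Equiv.prodComm m m) Prod.swap

theorem list_prod_submatrix_swap [DecidableEq m] (X : ι → Matrix (m × m) (m × m) A)
    (l : List ι) :
    (l.map X).prod.submatrix Prod.swap Prod.swap
      = (l.map fun b => (X b).submatrix Prod.swap Prod.swap).prod := by
  induction l with
  | nil => exact submatrix_one_equiv (Equiv.prodComm m m)
  | cons b l ih =>
    rw [List.map_cons, List.prod_cons, ← submatrix_swap_mul_submatrix_swap, ih, List.map_cons,
      List.prod_cons]

end SubmatrixSwap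

/-- A matrix of scalars, viewed as a matrix over an algebra. -/
abbrev scalarMatrix {R m n : Type*} (A : Type*) [CommSemiring R] [Semiring A] [Algebra R A]
    (X : Matrix m n R) : Matrix m n A :=
  X.map (algebraMap R A)

section ScalarMatrix

variable {R l m n : Type*} (A : Type*) [CommSemiring R] [Semiring A] [Algebra R A]

theorem scalarMatrix_mul [Fintype m] (X : Matrix l m R) (Y : Matrix m n R) :
    scalarMatrix A (X * Y) = scalarMatrix A X * scalarMatrix A Y :=
  Matrix.map_mul

theorem scalarMatrix_one [DecidableEq m] : scalarMatrix A (1 : Matrix m m R) = 1 :=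
  Matrix.map_one _ (map_zero _) (map_one _)

variable {A} in
theorem commute_scalarMatrix_apply (a : A) (X : Matrix m n R) (i : m) (j : n) :
    Commute a (scalarMatrix A X i j) :=
  Algebra.commute_algebraMap_right _ a

end ScalarMatrix

theorem map_scalarMatrix {R A B m n : Type*} [CommSemiring R] [Semiring A] [Semiring B]
    [Algebra R A] [Algebra R B] (f : A →ₐ[R] B) (X : Matrix m n R) :
    (scalarMatrix A X).map f = scalarMatrix B X := by
  ext
  simp

theorem scalarMatrix_kronecker {R A l m n o : Type*} [CommSemiring R] [Semiring A] [Algebra R A]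
    (X : Matrix l m R) (Y : Matrix n o R) :
    scalarMatrix A (X ⊗ₖ Y) = scalarMatrix A X ⊗ₖ scalarMatrix A Y :=
  map_kronecker (algebraMap R A) X Y

section SiteEmbedding

variable {ι α R : Type*} [Fintype ι] [DecidableEq ι] [DecidableEq α] [CommSemiring R]

/-- The operator acting as `m` on the tensor factor `b` and as the identity elsewhere; basis vectors
of the tensor product are indexed by functions `ι → α`. -/
def siteMatrix (b : ι) (m : Matrix α α R) : Matrix (ι → α) (ι → α) R :=
  Matrix.of fun f g => m (f b) (g b) * if ∀ c, c ≠ b → f c = g c then 1 else 0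

theorem siteMatrix_diagonal (b : ι) (d : α → R) :
    siteMatrix b (diagonal d) = diagonal fun f => d (f b) := by
  ext f g
  have hfg : f = g ↔ f b = g b ∧ ∀ c, c ≠ b → f c = g c :=
    ⟨by rintro rfl; simp, fun h => funext fun c =>
      (eq_or_ne c b).elim (fun hc => hc ▸ h.1) (h.2 c)⟩
  simp only [siteMatrix, of_apply, diagonal_apply, hfg, ite_and, mul_ite, mul_one, mul_zero]
  split_ifs <;> rfl

variable [Fintype α]

theorem siteMatrix_mul_apply {κ : Type*} (b : ι) (m : Matrix α α R) (X : Matrix (ι → α) κ R)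
    (f : ι → α) (g : κ) :
    (siteMatrix b m * X) f g = ∑ s, m (f b) s * X (Function.update f b s) g := by
  rw [Matrix.mul_apply]
  symm
  refine Fintype.sum_of_injective _ (Function.update_injective f b) _ _ (fun h hh => ?_)
    fun s => ?_
  · have hfh : ¬ ∀ c, c ≠ b → f c = h c := fun hfh =>
      hh ⟨h b, Function.update_eq_iff.2 ⟨rfl, hfh⟩⟩
    simp [siteMatrix, hfh]
  · have hfs : ∀ c, c ≠ b → f c = Function.update f b s c := fun c hc => by simp [hc]
    simp [siteMatrix, if_pos hfs]

theorem siteMatrix_mul (b : ι) (m m' : Matrix α α R) :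
    siteMatrix b (m * m') = siteMatrix b m * siteMatrix b m' := by
  suffices h : siteMatrix b (m * m') * 1 = siteMatrix b m * (siteMatrix b m' * 1) by
    simpa only [mul_one] using h
  ext f g
  simp only [siteMatrix_mul_apply, Function.update_self, Finset.mul_sum, Finset.sum_mul,
    Matrix.mul_apply (M := m), mul_assoc]
  rw [Finset.sum_comm]
  refine Finset.sum_congr rfl fun s _ => Finset.sum_congr rfl fun t _ => ?_
  rw [Function.update_idem]

/-- `siteMatrix b` as an algebra homomorphism. -/
def siteEmb (b : ι) : Matrix α α R →ₐ[R] Matrix (ι → α) (ι → α) R :=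
  AlgHom.ofLinearMap
    { toFun := siteMatrix b
      map_add' := fun m m' => by ext f g; simp [siteMatrix, ite_add_ite]
      map_smul' := fun r m => by ext f g; simp [siteMatrix] }
    (by simpa using siteMatrix_diagonal b fun _ => (1 : R))
    (siteMatrix_mul b)

theorem siteEmb_diagonal (b : ι) (d : α → R) :
    siteEmb b (diagonal d) = diagonal fun f => d (f b) :=
  siteMatrix_diagonal b d

theorem commute_siteEmb {b c : ι} (hbc : b ≠ c) (m m' : Matrix α α R) :
    Commute (siteEmb b m) (siteEmb c m') := by
  suffices h : siteMatrix b m * (siteMatrix c m' * 1) = siteMatrix c m' * (siteMatrix b m * 1) by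
    rw [mul_one, mul_one] at h
    exact h
  ext f g
  simp only [siteMatrix_mul_apply, Function.update_of_ne hbc, Function.update_of_ne hbc.symm,
    Finset.mul_sum]
  rw [Finset.sum_comm]
  refine Finset.sum_congr rfl fun t _ => Finset.sum_congr rfl fun s _ => ?_
  rw [Function.update_comm hbc, mul_left_comm]

theorem list_prod_siteEmb_diagonal (d : ι → α → R) (l : List ι) :
    (l.map fun b => siteEmb b (diagonal (d b))).prod
      = diagonal fun f => (l.map fun b => d b (f b)).prod := by
  induction l with
  | nil => simp
  | cons b l ih =>
    simp only [List.map_cons, List.prod_cons]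
    rw [ih, siteEmb_diagonal, diagonal_mul_diagonal]

end SiteEmbedding

/-- Operators on one tensor factor of the quantum space. -/
abbrev SiteOp := Matrix (Fin 3) (Fin 3) ℂ

/-- The R-matrix as a matrix on the auxiliary space with entries acting on one site. -/
noncomputable def rBlock (q u : ℂ) : Matrix (Fin 3) (Fin 3) SiteOp :=
  Matrix.of fun i j => Matrix.of fun s t => RpM q u (i, s) (j, t)

theorem rBlock_apply (q u : ℂ) (i j s t : Fin 3) :
    rBlock q u i j s t
      = if i = j then
          if s = t then if s = i then u ^ 3 * q - (u ^ 3 * q)⁻¹ else u ^ 3 - (u ^ 3)⁻¹ else 0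
        else if s = j ∧ t = i then (q - q⁻¹) * if j = i + 1 then u else u⁻¹ else 0 := by
  have hE (i j k l : Fin 3) : Eb i j ⊗ₖ Eb k l = single (i, k) (j, l) (1 : ℂ) := by
    simp [Eb, single_kronecker_single]
  simp only [rBlock, RpM, hE, Fin.sum_univ_three, of_apply, smul_single, Matrix.add_apply,
    Matrix.smul_apply]
  fin_cases i <;> fin_cases j <;> fin_cases s <;> fin_cases t <;> simp

/-- The fused R-matrix divided by its common scalar factor; the auxiliary index `k` stands for the
q-antisymmetric pair of states missing `k`. -/
noncomputable def fusedR (p u : ℂ) : Matrix (Fin 3) (Fin 3) SiteOp :=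
  Matrix.of fun i j =>
    if i = j then
      diagonal fun s => if s = i then u ^ 3 - (u ^ 3)⁻¹ else u ^ 3 * p ^ 3 - (u ^ 3 * p ^ 3)⁻¹
    else single i j (((p ^ 3)⁻¹ - p ^ 3) * if j = i + 1 then (p * u)⁻¹ else p * u)

/-- Embedding of the q-antisymmetric vectors; column `k` is the pair of states missing `k`. -/
noncomputable def antisymV (p : ℂ) : Matrix (Fin 3 × Fin 3) (Fin 3) ℂ :=
  Matrix.of fun s k => if s = (k + 1, k + 2) then 1 else if s = (k + 2, k + 1) then -p else 0

/-- Left inverse of `antisymV p`, normalized so that `antisymV p * antisymW p` is the projector. -/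
noncomputable def antisymW (p : ℂ) : Matrix (Fin 3) (Fin 3 × Fin 3) ℂ :=
  (1 / 2 : ℂ) • (antisymV p⁻¹)ᵀ

theorem antisymW_mul_antisymV {p : ℂ} (hp : p ≠ 0) : antisymW p * antisymV p = 1 := by
  ext i j
  simp only [antisymV, antisymW, mul_apply, Fintype.sum_prod_type, Fin.sum_univ_three, of_apply,
    Matrix.smul_apply, transpose_apply]
  fin_cases i <;> fin_cases j <;> simp [hp] <;> norm_num

theorem inv_sub_self_ne_zero {K : Type*} [Field K] {q : K} (hq : q ≠ 0) (hq2 : q ^ 2 ≠ 1) :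
    q⁻¹ - q ≠ 0 := by
  rw [sub_ne_zero, ne_comm, Ne, ← mul_eq_one_iff_eq_inv₀ hq, ← sq]
  exact hq2

theorem antisymV_mul_antisymW {p : ℂ} (hp : p ≠ 0) (hq2 : (p ^ 3) ^ 2 ≠ 1) :
    antisymV p * antisymW p = Pm (p ^ 3) p := by
  have hc := inv_sub_self_ne_zero (pow_ne_zero 3 hp) hq2
  have hneg : p ^ 3 - (p ^ 3)⁻¹ = -((p ^ 3)⁻¹ - p ^ 3) := (neg_sub _ _).symm
  ext ⟨i, s⟩ ⟨j, t⟩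
  change _ = (2 * ((p ^ 3)⁻¹ - p ^ 3))⁻¹ * rBlock (p ^ 3) p⁻¹ i j s t
  rw [rBlock_apply, inv_pow, inv_inv, inv_inv, hneg, inv_mul_cancel₀ (pow_ne_zero 3 hp), inv_one,
    sub_self]
  generalize (p ^ 3)⁻¹ - p ^ 3 = c at hc
  simp only [antisymV, antisymW, mul_apply, Fin.sum_univ_three, of_apply, Matrix.smul_apply,
    transpose_apply]
  fin_cases i <;> fin_cases j <;> fin_cases s <;> fin_cases t <;> simp <;> field_simp

section Antisymmetrizer

variable {A m : Type*} [Ring A] [Algebra ℂ A]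

theorem mul_antisymV_apply (p : ℂ) (X : Matrix m (Fin 3 × Fin 3) A) (s : m) (k : Fin 3) :
    (X * scalarMatrix A (antisymV p)) s k = X s (k + 1, k + 2) - p • X s (k + 2, k + 1) := by
  rw [Matrix.mul_apply, Fintype.sum_prod_type]
  simp only [Fin.sum_univ_three, map_apply, antisymV, of_apply, ← Algebra.commutes,
    ← Algebra.smul_def]
  fin_cases k <;> simp [sub_eq_add_neg, add_comm]

theorem antisymV_mul_apply (p : ℂ) (Z : Matrix (Fin 3) m A) (i j : Fin 3) (t : m) :
    (scalarMatrix A (antisymV p) * Z) (i, j) t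
      = if j = i + 1 then Z (i + 2) t else if j = i + 2 then -(p • Z (i + 1) t) else 0 := by
  rw [Matrix.mul_apply]
  simp only [Fin.sum_univ_three, map_apply, antisymV, of_apply, ← Algebra.smul_def]
  fin_cases i <;> fin_cases j <;> simp

end Antisymmetrizer

theorem rBlock_conjTranspose (q u : ℂ) : (rBlock q u)ᴴ = -rBlock (star q)⁻¹ (star u)⁻¹ := by
  ext i j s t
  simp only [conjTranspose_apply, star_apply, Matrix.neg_apply, rBlock_apply]
  fin_cases i <;> fin_cases j <;> fin_cases s <;> fin_cases t <;> simp <;> ring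

theorem fusedR_conjTranspose (p u : ℂ) : (fusedR p u)ᴴ = -fusedR (star p)⁻¹ (star u)⁻¹ := by
  ext i j s t
  simp only [conjTranspose_apply, star_apply, Matrix.neg_apply, fusedR, of_apply]
  fin_cases i <;> fin_cases j <;> fin_cases s <;> fin_cases t <;> simp <;> ring

theorem scalarMatrix_antisymV_conjTranspose (p : ℂ) :
    (scalarMatrix SiteOp (antisymV p))ᴴ
      = (2 : ℂ) • scalarMatrix SiteOp (antisymW (star p)⁻¹) := by
  have hstar (s : Fin 3 × Fin 3) (k : Fin 3) : star (antisymV p s k) = antisymV (star p) s k := by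
    simp only [antisymV, of_apply, apply_ite star, star_one, star_neg, star_zero]
  ext k s : 1
  change star (algebraMap ℂ SiteOp (antisymV p s k))
    = (2 : ℂ) • algebraMap ℂ _ (antisymW (star p)⁻¹ k s)
  rw [← algebraMap_star_comm, hstar, Algebra.smul_def, ← map_mul]
  simp [antisymW]

theorem fusion_right {p u : ℂ} (hp : p ≠ 0) (hu : u ≠ 0) :
    (rBlock (p ^ 3) u ⊗ₖ rBlock (p ^ 3) (u / p)).submatrix Prod.swap Prod.swap
        * scalarMatrix SiteOp (antisymV p)
      = scalarMatrix SiteOp (antisymV p)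
        * ((u ^ 3 / p ^ 3 - p ^ 3 / u ^ 3) • fusedR p u) := by
  ext ⟨i, j⟩ k s t
  rw [mul_antisymV_apply, antisymV_mul_apply]
  simp only [submatrix_apply, Prod.swap, kroneckerMap_apply, Matrix.smul_apply, Matrix.mul_apply,
    Matrix.sub_apply, Fin.sum_univ_three, rBlock_apply, fusedR]
  fin_cases i <;> fin_cases j <;> fin_cases k <;> fin_cases s <;> fin_cases t <;> simp [hp] <;>
    field_simp <;> ring

theorem fusion_left {p u : ℂ} (hp : p ≠ 0) (hu : u ≠ 0) :
    scalarMatrix SiteOp (antisymW p)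
        * (rBlock (p ^ 3) (u / p) ⊗ₖ rBlock (p ^ 3) u)
      = ((u ^ 3 / p ^ 3 - p ^ 3 / u ^ 3) • fusedR p u)
        * scalarMatrix SiteOp (antisymW p) := by
  -- Conjugate transposition inverts and conjugates the parameters, up to sign.
  have h := congrArg conjTranspose
    (fusion_right (p := (star p)⁻¹) (u := (star u)⁻¹) (by simpa using hp) (by simpa using hu))
  have hneg (X Y : Matrix (Fin 3) (Fin 3) SiteOp) : (-X) ⊗ₖ (-Y) = X ⊗ₖ Y := by
    ext
    simp
  have hswap (X : Matrix (Fin 3 × Fin 3) (Fin 3 × Fin 3) SiteOp) :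
      (X.submatrix Prod.swap Prod.swap).submatrix Prod.swap Prod.swap = X := by
    ext
    simp
  simp only [conjTranspose_mul, conjTranspose_smul, conjTranspose_submatrix,
    kronecker_conjTranspose_eq_submatrix_swap, scalarMatrix_antisymV_conjTranspose,
    rBlock_conjTranspose, fusedR_conjTranspose, hneg, hswap, star_sub, star_div₀, star_pow,
    star_inv₀, star_star, inv_inv, inv_pow, inv_div_inv, inv_div, Matrix.smul_mul,
    Matrix.mul_smul] at h ⊢
  rw [smul_comm, Matrix.neg_mul, smul_neg, ← neg_smul, neg_sub] at h
  exact smul_right_injective _ (two_ne_zero (α := ℂ)) h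

theorem rBlock_one (q : ℂ) (i j : Fin 3) : rBlock q 1 i j = single j i (q - q⁻¹) := by
  ext s t
  rw [rBlock_apply, single_apply]
  fin_cases i <;> fin_cases j <;> fin_cases s <;> fin_cases t <;> simp

theorem RpM_mul_antisymmetrizer {p : ℂ} (hp : p ≠ 0) (hq2 : (p ^ 3) ^ 2 ≠ 1) :
    RpM (p ^ 3) p⁻¹ * (antisymV p * antisymW p) = RpM (p ^ 3) p⁻¹ := by
  have hc : 2 * ((p ^ 3)⁻¹ - p ^ 3) ≠ 0 :=
    mul_ne_zero two_ne_zero (inv_sub_self_ne_zero (pow_ne_zero 3 hp) hq2)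
  have hR : RpM (p ^ 3) p⁻¹ = (2 * ((p ^ 3)⁻¹ - p ^ 3)) • (antisymV p * antisymW p) := by
    rw [antisymV_mul_antisymW hp hq2, Pm, smul_inv_smul₀ hc]
  rw [hR, Matrix.smul_mul, Matrix.mul_assoc, ← Matrix.mul_assoc (antisymW p),
    antisymW_mul_antisymV hp, Matrix.one_mul]

theorem rBlock_kronecker_rBlock_one_apply (q u : ℂ) (i i' j j' s t : Fin 3) :
    (rBlock q u ⊗ₖ rBlock q 1) (i, i') (j, j') s t
      = if i' = t then RpM q u (i, s) (j, j') * (q - q⁻¹) else 0 := by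
  rw [kroneckerMap_apply, rBlock_one]
  split_ifs with h
  · subst h
    rw [mul_single_apply_same]
    rfl
  · rw [mul_single_apply_of_ne _ _ _ _ _ (Ne.symm h)]

theorem rBlock_kronecker_rBlock_one_mul_antisymmetrizer {p : ℂ} (hp : p ≠ 0)
    (hq2 : (p ^ 3) ^ 2 ≠ 1) :
    rBlock (p ^ 3) p⁻¹ ⊗ₖ rBlock (p ^ 3) 1 * scalarMatrix SiteOp (antisymV p)
        * scalarMatrix SiteOp (antisymW p)
      = rBlock (p ^ 3) p⁻¹ ⊗ₖ rBlock (p ^ 3) 1 := by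
  rw [Matrix.mul_assoc, ← Matrix.map_mul]
  ext ⟨i, i'⟩ ⟨k, k'⟩ s t
  conv_rhs =>
    rw [rBlock_kronecker_rBlock_one_apply, ← RpM_mul_antisymmetrizer hp hq2, Matrix.mul_apply,
      Fintype.sum_prod_type, Finset.sum_mul]
  rw [Matrix.mul_apply, Fintype.sum_prod_type, Matrix.sum_apply]
  simp only [Matrix.sum_apply, map_apply, ← Algebra.commutes, ← Algebra.smul_def,
    Matrix.smul_apply, smul_eq_mul, rBlock_kronecker_rBlock_one_apply]
  split_ifs
  · simp only [Finset.sum_mul, mul_left_comm, mul_assoc]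
  · simp

/-- Diagonal gauge making the dependence of `fusedR` on the spectral parameter triangular. -/
noncomputable def spectralGauge (u : ℂ) : Matrix (Fin 3) (Fin 3) ℂ :=
  diagonal fun i => u ^ (2 * (i : ℕ))

/-- Coefficient of `u ^ 3` in the gauged fused R-matrix at `u * v`. -/
noncomputable def fusedLower (p v : ℂ) : Matrix (Fin 3) (Fin 3) SiteOp :=
  Matrix.of fun i j =>
    if i = j then v ^ 3 • diagonal fun s => if s = i then 1 else p ^ 3
    else if j < i then fusedR p v i j else 0

/-- Coefficient of `(u ^ 3)⁻¹` in the gauged fused R-matrix at `u * v`. -/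
noncomputable def fusedUpper (p v : ℂ) : Matrix (Fin 3) (Fin 3) SiteOp :=
  Matrix.of fun i j =>
    if i = j then -(v ^ 3)⁻¹ • diagonal fun s => if s = i then 1 else (p ^ 3)⁻¹
    else if i < j then fusedR p v i j else 0

theorem spectralGauge_mul_spectralGauge_inv {u : ℂ} (hu : u ≠ 0) :
    spectralGauge u * spectralGauge u⁻¹ = 1 := by
  simp [spectralGauge, diagonal_mul_diagonal, hu]

theorem spectralGauge_mul_fusedR (p v : ℂ) {u : ℂ} (hu : u ≠ 0) :
    scalarMatrix SiteOp (spectralGauge u) * fusedR p (u * v)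
      = (u ^ 3 • fusedLower p v + (u ^ 3)⁻¹ • fusedUpper p v)
        * scalarMatrix SiteOp (spectralGauge u) := by
  rw [spectralGauge, scalarMatrix, diagonal_map (map_zero _)]
  ext i j s t
  rw [diagonal_mul, mul_diagonal, ← Algebra.smul_def, ← Algebra.commutes, ← Algebra.smul_def]
  rcases eq_or_ne i j with rfl | hij
  · simp only [fusedR, fusedLower, fusedUpper, of_apply, if_true, Matrix.add_apply,
      Matrix.smul_apply, diagonal_apply, smul_eq_mul]
    split_ifs <;> ring
  · fin_cases i <;> fin_cases j <;>
      simp [fusedR, fusedLower, fusedUpper, single_apply] at hij ⊢ <;>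
      congr 1 <;> field_simp

theorem fusedLower_blockTriangular (p v : ℂ) :
    (fusedLower p v).BlockTriangular OrderDual.toDual := by
  intro i j hij
  have hij : i < j := hij
  simp [fusedLower, hij.ne, hij.not_gt]

theorem fusedUpper_blockTriangular (p v : ℂ) : (fusedUpper p v).BlockTriangular id := by
  intro i j hij
  have hij : j < i := hij
  simp [fusedUpper, hij.ne', hij.not_gt]

/-- Operators on the quantum space. -/
abbrev HOp (N : ℕ) := Matrix (HIdx N) (HIdx N) ℂ

section TransferMatrices

variable {N : ℕ}

/-- The R-matrix acting on the auxiliary space and on site `b`, as a matrix on the auxiliary space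
with entries acting on the quantum space. -/
noncomputable def Rsite (b : Fin N) (q u : ℂ) : Matrix (Fin 3) (Fin 3) (HOp N) :=
  (rBlock q u).map (siteEmb b)

/-- The monodromy matrix, as a matrix on the auxiliary space with entries acting on the quantum
space. -/
noncomputable def monBlock (q : ℂ) (ζ : Fin N → ℂ) (K : Matrix (Fin 3) (Fin 3) ℂ) (u : ℂ) :
    Matrix (Fin 3) (Fin 3) (HOp N) :=
  scalarMatrix (HOp N) K * ((List.finRange N).reverse.map fun b => Rsite b q (u / ζ b)).prod

theorem Mon_eq_compRingEquiv (q : ℂ) (ζ : Fin N → ℂ) (K : Matrix (Fin 3) (Fin 3) ℂ) (u : ℂ) :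
    Mon N q ζ K u = compRingEquiv _ _ _ (monBlock q ζ K u) := by
  have hK : Kaux N K = compRingEquiv _ _ _ (scalarMatrix (HOp N) K) := by
    ext x y
    simp [Kaux, compRingEquiv_apply, algebraMap_matrix_apply]
  have hR (v : ℂ) (b : Fin N) : Raux N q v b = compRingEquiv _ _ _ (Rsite b q v) := by
    ext x y
    simp [Raux, compRingEquiv_apply, Rsite, siteEmb, siteMatrix, rBlock]
  simp only [Mon, monBlock, map_mul, map_list_prod, List.map_map, hK, hR, Function.comp_def]

theorem T1_eq_trace (q : ℂ) (ζ : Fin N → ℂ) (K : Matrix (Fin 3) (Fin 3) ℂ) (u : ℂ) :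
    T1 N q ζ K u = (monBlock q ζ K u).trace := by
  ext f g
  simp [T1, Mon_eq_compRingEquiv, trace, Matrix.sum_apply, compRingEquiv_apply]

theorem embB_mul_embA_apply (M M' : Matrix (Fin 3 × HIdx N) (Fin 3 × HIdx N) ℂ)
    (i i' j j' : Fin 3) (f g : HIdx N) :
    (embB N M * embA N M') (i, i', f) (j, j', g) = ∑ h, M (i', f) (j', h) * M' (i, h) (j, g) := by
  simp only [Matrix.mul_apply, Fintype.sum_prod_type, embB, embA, of_apply, mul_ite, ite_mul,
    mul_one, mul_zero, zero_mul]
  rw [Finset.sum_eq_single i, Finset.sum_eq_single j']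
  · simp
  · intro k' _ hk'
    simp [hk']
  · simp
  · intro k _ hk
    simp [hk.symm]
  · simp

theorem embP_mul_apply (P : Matrix (Fin 3 × Fin 3) (Fin 3 × Fin 3) ℂ)
    (X : Matrix (Fin 3 × Fin 3 × HIdx N) (Fin 3 × Fin 3 × HIdx N) ℂ) (i i' : Fin 3) (f : HIdx N)
    (y : Fin 3 × Fin 3 × HIdx N) :
    (embP N P * X) (i, i', f) y = ∑ k, ∑ k', P (i, i') (k, k') * X (k, k', f) y := by
  simp [Matrix.mul_apply, Fintype.sum_prod_type, embP]

theorem T2_eq_trace (q p : ℂ) (ζ : Fin N → ℂ) (K : Matrix (Fin 3) (Fin 3) ℂ) (u : ℂ) :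
    T2 N q p ζ K u
      = (scalarMatrix (HOp N) (Pm q p)
          * (monBlock q ζ K u ⊗ₖ monBlock q ζ K (u / p)).submatrix Prod.swap Prod.swap).trace := by
  ext f g
  simp only [T2, of_apply, mul_assoc, embP_mul_apply, embB_mul_embA_apply, Mon_eq_compRingEquiv]
  simp only [trace, diag_apply, Matrix.sum_apply, Fintype.sum_prod_type,
    Matrix.mul_apply (M := scalarMatrix (HOp N) _), map_apply, ← Algebra.smul_def,
    Matrix.smul_apply, submatrix_apply, kroneckerMap_apply, Prod.swap,
    Matrix.mul_apply (M := monBlock q ζ K u _ _)]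
  rfl

theorem monBlock_kronecker_monBlock (q : ℂ) (ζ : Fin N → ℂ) (K : Matrix (Fin 3) (Fin 3) ℂ)
    (u v : ℂ) :
    monBlock q ζ K u ⊗ₖ monBlock q ζ K v
      = scalarMatrix (HOp N) (K ⊗ₖ K) * ((List.finRange N).reverse.map fun b =>
          Rsite b q (u / ζ b) ⊗ₖ Rsite b q (v / ζ b)).prod := by
  rw [monBlock, monBlock,
    kronecker_mul_of_commute _ _ _ _ fun i j k l => Algebra.commute_algebraMap_right (K k l) _,
    kronecker_list_prod _ _ (fun b c hbc i j k l => commute_siteEmb hbc _ _)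
      (List.nodup_reverse.2 (List.nodup_finRange N)), scalarMatrix_kronecker]

end TransferMatrices

section DiagonalTwist

/-- The diagonal entries of the twist induced by `diagonal κ` on q-antisymmetric pairs. -/
def fusedTwist (κ : Fin 3 → ℂ) (k : Fin 3) : ℂ :=
  κ (k + 1) * κ (k + 2)

theorem diagonal_kronecker_diagonal_mul_antisymV (p : ℂ) (κ : Fin 3 → ℂ) :
    (diagonal κ ⊗ₖ diagonal κ) * antisymV p = antisymV p * diagonal (fusedTwist κ) := by
  rw [diagonal_kronecker_diagonal]
  ext s k
  rw [diagonal_mul, mul_diagonal, antisymV, of_apply, fusedTwist]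
  split_ifs with h h <;> simp [h, mul_comm]

theorem antisymW_mul_diagonal_kronecker_diagonal (p : ℂ) (κ : Fin 3 → ℂ) :
    antisymW p * (diagonal κ ⊗ₖ diagonal κ) = diagonal (fusedTwist κ) * antisymW p := by
  have h := congrArg transpose (diagonal_kronecker_diagonal_mul_antisymV p⁻¹ κ)
  rw [transpose_mul, transpose_mul, diagonal_kronecker_diagonal, diagonal_transpose,
    diagonal_transpose] at h
  rw [antisymW, Matrix.smul_mul, Matrix.mul_smul, diagonal_kronecker_diagonal, h]

end DiagonalTwist

section FusedTransferMatrix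

variable {N : ℕ}

/-- The fused R-matrix acting on site `b`. -/
noncomputable def fusedSite (b : Fin N) (p u : ℂ) : Matrix (Fin 3) (Fin 3) (HOp N) :=
  (fusedR p u).map (siteEmb b)

theorem Rsite_fusion_right (b : Fin N) {p u : ℂ} (hp : p ≠ 0) (hu : u ≠ 0) :
    (Rsite b (p ^ 3) u ⊗ₖ Rsite b (p ^ 3) (u / p)).submatrix Prod.swap Prod.swap
        * scalarMatrix (HOp N) (antisymV p)
      = scalarMatrix (HOp N) (antisymV p)
        * ((u ^ 3 / p ^ 3 - p ^ 3 / u ^ 3) • fusedSite b p u) := by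
  have h := congrArg (·.map (siteEmb b)) (fusion_right hp hu)
  simpa only [Rsite, fusedSite, Matrix.map_mul, map_scalarMatrix, ← submatrix_map, map_kronecker,
    Matrix.map_smul _ _ fun a => map_smul (siteEmb b) _ a] using h

theorem Rsite_fusion_left (b : Fin N) {p u : ℂ} (hp : p ≠ 0) (hu : u ≠ 0) :
    scalarMatrix (HOp N) (antisymW p) * (Rsite b (p ^ 3) (u / p) ⊗ₖ Rsite b (p ^ 3) u)
      = ((u ^ 3 / p ^ 3 - p ^ 3 / u ^ 3) • fusedSite b p u)
        * scalarMatrix (HOp N) (antisymW p) := by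
  have h := congrArg (·.map (siteEmb b)) (fusion_left hp hu)
  simpa only [Rsite, fusedSite, Matrix.map_mul, map_scalarMatrix, map_kronecker,
    Matrix.map_smul _ _ fun a => map_smul (siteEmb b) _ a] using h

theorem Rsite_kronecker_Rsite_one_mul_antisymmetrizer (b : Fin N) {p : ℂ} (hp : p ≠ 0)
    (hq2 : (p ^ 3) ^ 2 ≠ 1) :
    Rsite b (p ^ 3) p⁻¹ ⊗ₖ Rsite b (p ^ 3) 1 * scalarMatrix (HOp N) (antisymV p)
        * scalarMatrix (HOp N) (antisymW p)
      = Rsite b (p ^ 3) p⁻¹ ⊗ₖ Rsite b (p ^ 3) 1 := by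
  have h := congrArg (·.map (siteEmb b)) (rBlock_kronecker_rBlock_one_mul_antisymmetrizer hp hq2)
  simpa only [Rsite, Matrix.map_mul, map_scalarMatrix, map_kronecker] using h

/-- Transfer matrix built from the fused R-matrices, with diagonal twist `κ`. -/
noncomputable def fusedTransfer (p : ℂ) (ζ : Fin N → ℂ) (κ : Fin 3 → ℂ) (u : ℂ) : HOp N :=
  (scalarMatrix (HOp N) (diagonal κ)
    * ((List.finRange N).reverse.map fun b => fusedSite b p (u / ζ b)).prod).trace

/-- The scalar factor split off by fusion at all sites. -/
noncomputable def fusionFactor (p : ℂ) (ζ : Fin N → ℂ) (u : ℂ) : ℂ :=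
  ∏ b, (u ^ 3 / (p ^ 3 * ζ b ^ 3) - p ^ 3 * ζ b ^ 3 / u ^ 3)

theorem trace_twist_mul_list_prod_smul_fusedSite (p : ℂ) (ζ : Fin N → ℂ) (κ : Fin 3 → ℂ) (u : ℂ) :
    (scalarMatrix (HOp N) (diagonal κ) * ((List.finRange N).reverse.map fun b =>
        ((u / ζ b) ^ 3 / p ^ 3 - p ^ 3 / (u / ζ b) ^ 3) • fusedSite b p (u / ζ b)).prod).trace
      = fusionFactor p ζ u • fusedTransfer p ζ κ u := by
  have hc (b : Fin N) : (u / ζ b) ^ 3 / p ^ 3 - p ^ 3 / (u / ζ b) ^ 3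
      = u ^ 3 / (p ^ 3 * ζ b ^ 3) - p ^ 3 * ζ b ^ 3 / u ^ 3 := by
    rw [div_pow, div_div, div_div_eq_mul_div, mul_comm (ζ b ^ 3)]
  simp only [hc]
  rw [list_prod_smul, list_prod_finRange_reverse, Matrix.mul_smul, trace_smul, fusionFactor,
    fusedTransfer]

variable {p u : ℂ} {ζ : Fin N → ℂ}

theorem T2_eq_fusionFactor_smul_fusedTransfer (hp : p ≠ 0) (hq2 : (p ^ 3) ^ 2 ≠ 1)
    (hζ : ∀ b, ζ b ≠ 0) (κ : Fin 3 → ℂ) (hu : u ≠ 0) :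
    T2 N (p ^ 3) p ζ (diagonal κ) u
      = fusionFactor p ζ u • fusedTransfer p ζ (fusedTwist κ) u := by
  have hswap : (diagonal κ ⊗ₖ diagonal κ).submatrix Prod.swap Prod.swap
      = diagonal κ ⊗ₖ diagonal κ := by
    rw [diagonal_kronecker_diagonal, submatrix_diagonal _ _ Prod.swap_injective]
    simp only [Function.comp_def, Prod.fst_swap, Prod.snd_swap, mul_comm]
  rw [T2_eq_trace, monBlock_kronecker_monBlock, ← submatrix_swap_mul_submatrix_swap,
    list_prod_submatrix_swap, submatrix_map, hswap, ← antisymV_mul_antisymW hp hq2,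
    scalarMatrix_mul, ← trace_twist_mul_list_prod_smul_fusedSite]
  refine trace_projector_mul_eq (fun a => commute_scalarMatrix_apply a _) ?_ ?_
  · rw [← scalarMatrix_mul, antisymW_mul_antisymV hp, scalarMatrix_one]
  · rw [Matrix.mul_assoc, list_prod_mul_eq_mul_list_prod fun b => ?_, ← Matrix.mul_assoc,
      ← scalarMatrix_mul, diagonal_kronecker_diagonal_mul_antisymV, scalarMatrix_mul,
      Matrix.mul_assoc]
    rw [div_right_comm]
    exact Rsite_fusion_right b hp (div_ne_zero hu (hζ b))

theorem T1_mul_T1_eq_fusionFactor_smul_fusedTransfer (hp : p ≠ 0) (hq2 : (p ^ 3) ^ 2 ≠ 1)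
    (hζ : ∀ b, ζ b ≠ 0) (κ : Fin 3 → ℂ) (n : Fin N) :
    T1 N (p ^ 3) ζ (diagonal κ) (ζ n / p) * T1 N (p ^ 3) ζ (diagonal κ) (ζ n)
      = fusionFactor p ζ (ζ n) • fusedTransfer p ζ (fusedTwist κ) (ζ n) := by
  have hleft (b : Fin N) := Rsite_fusion_left b hp (div_ne_zero (hζ n) (hζ b))
  have hWV : scalarMatrix (HOp N) (antisymW p) * scalarMatrix (HOp N) (antisymV p) = 1 := by
    rw [← scalarMatrix_mul, antisymW_mul_antisymV hp, scalarMatrix_one]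
  rw [T1_eq_trace, T1_eq_trace, ← trace_kronecker, monBlock_kronecker_monBlock,
    ← trace_twist_mul_list_prod_smul_fusedSite]
  simp only [div_right_comm (ζ n) p]
  refine trace_eq_of_mul_projector_eq (fun a => commute_scalarMatrix_apply a _) hWV ?_ ?_
  · rw [← Matrix.mul_assoc, ← scalarMatrix_mul, antisymW_mul_diagonal_kronecker_diagonal,
      scalarMatrix_mul, Matrix.mul_assoc, Matrix.mul_assoc,
      list_prod_mul_eq_mul_list_prod fun b => (hleft b).symm]
  · rw [Matrix.mul_assoc _ _ (scalarMatrix _ (antisymV p)), Matrix.mul_assoc,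
      list_prod_mul_projector_of_mem hWV hleft (c := n) (by simp)]
    rw [div_self (hζ n), one_div]
    exact Rsite_kronecker_Rsite_one_mul_antisymmetrizer n hp hq2

end FusedTransferMatrix

section FusedTransferInterpolation

variable {N : ℕ}

theorem fusedTransfer_eq_trace_gauged (p : ℂ) (ζ : Fin N → ℂ) (κ : Fin 3 → ℂ) {u : ℂ}
    (hu : u ≠ 0) :
    fusedTransfer p ζ κ u
      = (scalarMatrix (HOp N) (diagonal κ) * ((List.finRange N).reverse.map fun b =>
          u ^ 3 • (fusedLower p (ζ b)⁻¹).map (siteEmb b)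
            + (u ^ 3)⁻¹ • (fusedUpper p (ζ b)⁻¹).map (siteEmb b)).prod).trace := by
  have hWV : scalarMatrix (HOp N) (spectralGauge u⁻¹) * scalarMatrix (HOp N) (spectralGauge u)
      = 1 := by
    have h := spectralGauge_mul_spectralGauge_inv (inv_ne_zero hu)
    rw [inv_inv] at h
    rw [← scalarMatrix_mul, h, scalarMatrix_one]
  have hVW : scalarMatrix (HOp N) (spectralGauge u) * scalarMatrix (HOp N) (spectralGauge u⁻¹)
      = 1 := by
    rw [← scalarMatrix_mul, spectralGauge_mul_spectralGauge_inv hu, scalarMatrix_one]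
  have hκ : diagonal κ * spectralGauge u = spectralGauge u * diagonal κ := by
    simp only [spectralGauge, diagonal_mul_diagonal, mul_comm]
  have hsite (b : Fin N) : (u ^ 3 • (fusedLower p (ζ b)⁻¹).map (siteEmb b)
        + (u ^ 3)⁻¹ • (fusedUpper p (ζ b)⁻¹).map (siteEmb b))
          * scalarMatrix (HOp N) (spectralGauge u)
      = scalarMatrix (HOp N) (spectralGauge u) * fusedSite b p (u / ζ b) := by
    have h := congrArg (·.map (siteEmb b)) (spectralGauge_mul_fusedR p (ζ b)⁻¹ hu).symm
    simpa only [fusedSite, Matrix.map_mul, map_scalarMatrix, Matrix.map_add _ (map_add (siteEmb b)),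
      Matrix.map_smul _ _ fun a => map_smul (siteEmb b) _ a, div_eq_mul_inv] using h
  rw [fusedTransfer, ← trace_projector_mul_eq (fun a => commute_scalarMatrix_apply a _) hWV ?_, hVW,
    Matrix.one_mul]
  rw [Matrix.mul_assoc, list_prod_mul_eq_mul_list_prod hsite, ← Matrix.mul_assoc,
    ← Matrix.mul_assoc, ← scalarMatrix_mul, ← scalarMatrix_mul, hκ]

theorem Dop_mul_Dop (r : ℂ) (k : Fin 3) :
    Dop N r (k + 1) * Dop N r (k + 2) = diagonal fun f => ∏ b, if f b = k then 1 else r := by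
  have hsplit (s : Fin 3) : (if s = k then 1 else r)
      = (if s = k + 1 then r else 1) * if s = k + 2 then r else 1 := by
    fin_cases k <;> fin_cases s <;> simp
  simp only [hsplit, Finset.prod_mul_distrib, Finset.prod_ite, Finset.prod_const, one_pow, mul_one,
    Dop, diagonal_mul_diagonal, cnt]

theorem DopInv_eq_Dop_inv (q : ℂ) (i : Fin 3) : DopInv N q i = Dop N q⁻¹ i := by
  simp only [DopInv, Dop, inv_pow]

theorem trace_twist_mul_list_prod_of_blockTriangular {o : Type*} [LinearOrder o] {w : Fin 3 → o}
    (hw : Function.Injective w) {X : Fin N → Matrix (Fin 3) (Fin 3) SiteOp}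
    (hX : ∀ b, (X b).BlockTriangular w) {c : Fin N → ℂ} {r : ℂ}
    (hdiag : ∀ b k, X b k k = c b • diagonal fun s => if s = k then 1 else r) (κ : Fin 3 → ℂ) :
    (scalarMatrix (HOp N) (diagonal κ)
        * ((List.finRange N).reverse.map fun b => (X b).map (siteEmb b)).prod).trace
      = (∏ b, c b) • ∑ k, κ k • (Dop N r (k + 1) * Dop N r (k + 2)) := by
  rw [scalarMatrix, diagonal_map (map_zero _), trace_diagonal_mul, Finset.smul_sum]
  refine Finset.sum_congr rfl fun k _ => ?_
  rw [list_prod_apply_self_of_blockTriangular hw fun b => (hX b).map (siteEmb b)]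
  simp only [map_apply, hdiag, map_smul]
  rw [list_prod_smul, list_prod_siteEmb_diagonal fun _ s => if s = k then 1 else r, Dop_mul_Dop]
  simp only [list_prod_finRange_reverse, ← Algebra.smul_def]
  rw [smul_comm]

theorem fusedTransfer_eq_mean_add_sum {ζ : Fin N → ℂ} (hζ : ∀ b, ζ b ≠ 0)
    (hdist : ∀ n b, n ≠ b → (ζ n ^ 3) ^ 2 ≠ (ζ b ^ 3) ^ 2) (p : ℂ) (κ : Fin 3 → ℂ) {u : ℂ}
    (hu : u ≠ 0) :
    fusedTransfer p ζ κ u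
      = (∏ b, (u ^ 3 / ζ b ^ 3 - ζ b ^ 3 / u ^ 3)) • (1 / 2 : ℂ)
          • ∑ k, κ k • (Dop N (p ^ 3) (k + 1) * Dop N (p ^ 3) (k + 2)
            + DopInv N (p ^ 3) (k + 1) * DopInv N (p ^ 3) (k + 2))
        + ∑ n, ((u ^ 3 / ζ n ^ 3 + ζ n ^ 3 / u ^ 3) / 2
            * ∏ b ∈ Finset.univ.erase n, (u ^ 3 / ζ b ^ 3 - ζ b ^ 3 / u ^ 3)
                / (ζ n ^ 3 / ζ b ^ 3 - ζ b ^ 3 / ζ n ^ 3))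
          • fusedTransfer p ζ κ (ζ n) := by
  have hξ (b : Fin N) : ζ b ^ 3 ≠ 0 := pow_ne_zero 3 (hζ b)
  have hlower := trace_twist_mul_list_prod_of_blockTriangular OrderDual.toDual.injective
    (fun b => fusedLower_blockTriangular p (ζ b)⁻¹) (c := fun b => (ζ b)⁻¹ ^ 3) (r := p ^ 3)
    (fun b k => by simp [fusedLower]) κ
  have hupper := trace_twist_mul_list_prod_of_blockTriangular Function.injective_id
    (fun b => fusedUpper_blockTriangular p (ζ b)⁻¹) (c := fun b => -((ζ b)⁻¹ ^ 3)⁻¹)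
    (r := (p ^ 3)⁻¹) (fun b k => by simp [fusedUpper]) κ
  have h := congrArg (fun X => (scalarMatrix (HOp N) (diagonal κ) * X).trace)
    (list_prod_smul_add_inv_smul_eq_mean_add_sum (ξ := fun b => ζ b ^ 3) (s := Finset.univ)
      (fun n _ b _ hnb => by_contra fun hne => hdist n b hne hnb) (fun b _ => hξ b)
      (fun b => (fusedLower p (ζ b)⁻¹).map (siteEmb b))
      (fun b => (fusedUpper p (ζ b)⁻¹).map (siteEmb b))
      (l := (List.finRange N).reverse) (by simp) (pow_ne_zero 3 hu))
  simp only [Matrix.mul_add, Matrix.mul_smul, Matrix.mul_sum, trace_add, trace_smul, trace_sum,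
    ← fusedTransfer_eq_trace_gauged p ζ κ hu] at h
  simp only [← fusedTransfer_eq_trace_gauged p ζ κ (hζ _), hlower, hupper] at h
  rw [h, smul_smul (∏ b, ζ b ^ 3), ← Finset.prod_mul_distrib, smul_smul (∏ b, -ζ b ^ 3)⁻¹,
    ← Finset.prod_inv_distrib, ← Finset.prod_mul_distrib]
  simp only [inv_pow, inv_inv, inv_neg, neg_mul_neg, ne_eq, hξ, not_false_eq_true, mul_inv_cancel₀,
    inv_mul_cancel₀, Finset.prod_const_one, one_smul, DopInv_eq_Dop_inv, smul_add,
    Finset.sum_add_distrib]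

theorem sum_fusedTwist_smul (q α β γ : ℂ) :
    ∑ k, fusedTwist ![α, β, γ] k
        • (Dop N q (k + 1) * Dop N q (k + 2) + DopInv N q (k + 1) * DopInv N q (k + 2))
      = (α * β) • (Dop N q 0 * Dop N q 1 + DopInv N q 0 * DopInv N q 1)
        + (α * γ) • (Dop N q 0 * Dop N q 2 + DopInv N q 0 * DopInv N q 2)
        + (β * γ) • (Dop N q 1 * Dop N q 2 + DopInv N q 1 * DopInv N q 2) := by
  have hD (r : ℂ) : Dop N r 2 * Dop N r 0 = Dop N r 0 * Dop N r 2 := by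
    simp only [Dop, diagonal_mul_diagonal, mul_comm]
  rw [mul_comm α γ]
  simp only [DopInv_eq_Dop_inv, ← hD]
  rw [Fin.sum_univ_three, add_assoc, add_comm, add_comm (_ • (_ + Dop N q⁻¹ (1 + 1) * _))]
  rfl

end FusedTransferInterpolation

theorem fusionFactor_ne_zero {N : ℕ} {p : ℂ} {ζ : Fin N → ℂ} (hp : p ≠ 0)
    (hq2 : (p ^ 3) ^ 2 ≠ 1) (hζ : ∀ b, ζ b ≠ 0)
    (hdist : ∀ n b : Fin N, n ≠ b → (ζ n ^ 3) ^ 2 ≠ (p ^ 3) ^ 2 * (ζ b ^ 3) ^ 2) (n : Fin N) :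
    fusionFactor p ζ (ζ n) ≠ 0 := by
  have hξ (b : Fin N) : ζ b ^ 3 ≠ 0 := pow_ne_zero 3 (hζ b)
  refine Finset.prod_ne_zero_iff.2 fun b _ h => ?_
  rw [sub_eq_zero, div_eq_div_iff (mul_ne_zero (pow_ne_zero 3 hp) (hξ b)) (hξ n), ← sq, ← sq,
    mul_pow] at h
  rcases eq_or_ne n b with rfl | hnb
  · exact hq2 ((right_eq_mul₀ (pow_ne_zero 2 (hξ n))).1 h)
  · exact hdist n b hnb h

/-- reconstruction of the fused transfer matrix `T₂` from `T₁`
for the diagonal twist. -/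
theorem T2_reconstruction_from_T1 (N : ℕ) (hN : 1 ≤ N) (q p : ℂ)
    (hq : q ≠ 0) (hq2 : q ^ 2 ≠ 1) (hp : p ^ 3 = q)
    (ζ : Fin N → ℂ) (hζ : ∀ b, ζ b ≠ 0)
    (hdist : ∀ n b : Fin N, n ≠ b → (ζ n ^ 3) ^ 2 ≠ (ζ b ^ 3) ^ 2)
    (hdist' : ∀ n b : Fin N, n ≠ b → (ζ n ^ 3) ^ 2 ≠ q ^ 2 * (ζ b ^ 3) ^ 2)
    (α β γ : ℂ) (u : ℂ) (hu : u ≠ 0) :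
    T2 N q p ζ (Ktw1 α β γ) u
      = (∏ b : Fin N,
            ((u ^ 3 / ζ b ^ 3 - ζ b ^ 3 / u ^ 3)
              * (u ^ 3 / (q * ζ b ^ 3) - q * ζ b ^ 3 / u ^ 3)))
          • ((1 / 2 : ℂ) •
              ((α * β) • (Dop N q 0 * Dop N q 1 + DopInv N q 0 * DopInv N q 1)
                + (α * γ) • (Dop N q 0 * Dop N q 2 + DopInv N q 0 * DopInv N q 2)
                + (β * γ) • (Dop N q 1 * Dop N q 2 + DopInv N q 1 * DopInv N q 2)))
        + ∑ n : Fin N,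
            (((u ^ 3 / ζ n ^ 3 + ζ n ^ 3 / u ^ 3) / 2)
              * (∏ b : Fin N,
                  (u ^ 3 / (q * ζ b ^ 3) - q * ζ b ^ 3 / u ^ 3)
                    / (ζ n ^ 3 / (q * ζ b ^ 3) - q * ζ b ^ 3 / ζ n ^ 3))
              * (∏ b ∈ Finset.univ.erase n,
                  (u ^ 3 / ζ b ^ 3 - ζ b ^ 3 / u ^ 3)
                    / (ζ n ^ 3 / ζ b ^ 3 - ζ b ^ 3 / ζ n ^ 3)))
              • (T1 N q ζ (Ktw1 α β γ) (ζ n / p) * T1 N q ζ (Ktw1 α β γ) (ζ n)) := by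
  subst hp
  have hp0 : p ≠ 0 := (pow_ne_zero_iff three_ne_zero).1 hq
  rw [Ktw1, T2_eq_fusionFactor_smul_fusedTransfer hp0 hq2 hζ _ hu,
    fusedTransfer_eq_mean_add_sum hζ hdist p _ hu, sum_fusedTwist_smul, smul_add, Finset.smul_sum]
  congr 1
  · rw [smul_smul, Finset.prod_mul_distrib, mul_comm, fusionFactor]
  · refine Finset.sum_congr rfl fun n _ => ?_
    rw [T1_mul_T1_eq_fusionFactor_smul_fusedTransfer hp0 hq2 hζ, smul_smul, smul_smul,
      Finset.prod_div_distrib (s := Finset.univ), ← fusionFactor, ← fusionFactor,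
      mul_right_comm _ (_ / _), mul_assoc _ (_ / _), div_mul_cancel₀, mul_comm]
    exact fusionFactor_ne_zero hp0 hq2 hζ hdist' n
end
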